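/- arXiv:2510.13340 — 3 statements merged into one kernel-verified Lean document; each statement's English description precedes it below -/
import Mathlib

section
/- Let s ∈ (0,1) and let f be the meromorphic function f(β) = [Γ(β+1) sin(πs) / (Γ(β−2s+1) sin(π(β−2s)))] · ( sin(π(β−s))/sin(πs) + Γ(2s−β) Γ(β+1)/Γ(2s) ). Then: (i) if s ≤ 1/2, there exists α > 0 such that f has no zeros in the strip {β ∈ ℂ : 0 < Re β < 2s + α}, and f has at least one zero in the strip {β ∈ ℂ : 2s < Re β < 2s + 1/2}; (ii) if s ≥ 1/2, there exists α > 0 such that f has no zeros in the strip {β ∈ ℂ : 2s − 1 < Re β < s + 1/2 + α}, and f has at least one zero in the strip {β ∈ ℂ : s + 1/2 < Re β < s + 1}. -/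
/-!
STATEMENT 3: location of the zeros of the Mellin symbol
f(β) = [Γ(β+1) sin(πs)/(Γ(β−2s+1) sin(π(β−2s)))] ·
       ( sin(π(β−s))/sin(πs) + Γ(2s−β)Γ(β+1)/Γ(2s) ).
A zero of f is a point where f is defined (not a pole, i.e. the formula defines an
analytic function there) and vanishes.
(i) If s ≤ 1/2: no zeros in {0 < Re β < 2s + α} for some α > 0, and at least one zero
    in {2s < Re β < 2s + 1/2}.
(ii) If s ≥ 1/2: no zeros in {2s − 1 < Re β < s + 1/2 + α} for some α > 0, and at least
    one zero in {s + 1/2 < Re β < s + 1}.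
-/

noncomputable def fNeumann (s : ℝ) (β : ℂ) : ℂ :=
  Complex.Gamma (β + 1) * Complex.sin (Real.pi * s) /
      (Complex.Gamma (β - 2 * s + 1) * Complex.sin (Real.pi * (β - 2 * s))) *
    (Complex.sin (Real.pi * (β - s)) / Complex.sin (Real.pi * s) +
      Complex.Gamma (2 * s - β) * Complex.Gamma (β + 1) / Complex.Gamma (2 * s))

/-- `β` is a zero of `F` : `F` is defined (not a pole, i.e. analytic) at `β` and vanishes. -/
def IsZeroOf (F : ℂ → ℂ) (β : ℂ) : Prop := AnalyticAt ℂ F β ∧ F β = 0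

open Filter Topology

noncomputable def thA (y t : ℝ) : ℝ := Real.pi / 2 - Real.arctan (t / y)

lemma thA_anti {y : ℝ} (hy : 0 < y) : StrictAnti (thA y) := by
  intro a b hab
  have : Real.arctan (a / y) < Real.arctan (b / y) :=
    Real.arctan_strictMono (div_lt_div_of_pos_right hab hy)
  unfold thA; linarith

lemma thA_pos (y t : ℝ) : 0 < thA y t := by
  have := Real.arctan_lt_pi_div_two (t / y); unfold thA; linarith

lemma thA_lt (y t : ℝ) : thA y t < Real.pi := by
  have := Real.neg_pi_div_two_lt_arctan (t / y); unfold thA; linarith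

lemma thA_neg (y t : ℝ) : thA y (-t) = Real.pi - thA y t := by
  unfold thA; rw [neg_div, Real.arctan_neg]; ring

lemma thA_zero (y : ℝ) : thA y 0 = Real.pi / 2 := by
  unfold thA; simp

lemma thA_tendsto {y : ℝ} (hy : 0 < y) (p : ℝ) :
    Tendsto (fun n : ℕ => thA y (p + n)) atTop (𝓝 0) := by
  have h1 : Tendsto (fun n : ℕ => (p + n) / y) atTop atTop :=
    (tendsto_atTop_add_const_left _ p tendsto_natCast_atTop_atTop).atTop_div_const hy
  have h2 := (Real.tendsto_arctan_atTop.mono_right nhdsWithin_le_nhds).comp h1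
  have h3 := h2.const_sub (Real.pi / 2)
  simpa [thA, Function.comp_def] using h3

lemma thA_polar {y : ℝ} (hy : 0 < y) (t : ℝ) :
    ∃ r : ℝ, 0 < r ∧ (t + y * Complex.I : ℂ) = r * Complex.exp (thA y t * Complex.I) := by
  have hs : 0 < √(1 + (t / y) ^ 2) := Real.sqrt_pos.2 (by positivity)
  refine ⟨y * √(1 + (t / y) ^ 2), by positivity, ?_⟩
  rw [Complex.exp_mul_I, ← Complex.ofReal_cos, ← Complex.ofReal_sin]
  have h1 : Real.cos (thA y t) = (t / y) / √(1 + (t / y) ^ 2) := by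
    unfold thA; rw [Real.cos_pi_div_two_sub, Real.sin_arctan]
  have h2 : Real.sin (thA y t) = 1 / √(1 + (t / y) ^ 2) := by
    unfold thA; rw [Real.sin_pi_div_two_sub, Real.cos_arctan]
  apply Complex.ext
  · simp only [Complex.add_re, Complex.mul_re, Complex.ofReal_re, Complex.ofReal_im, Complex.I_re,
      Complex.I_im, Complex.add_im, Complex.mul_im, h1, h2]
    field_simp; ring
  · simp only [Complex.add_re, Complex.mul_re, Complex.ofReal_re, Complex.ofReal_im, Complex.I_re,
      Complex.I_im, Complex.add_im, Complex.mul_im, h1, h2]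
    field_simp; ring

lemma thA_polar_conj {y : ℝ} (hy : 0 < y) (t : ℝ) :
    ∃ r : ℝ, 0 < r ∧ (t - y * Complex.I : ℂ) = r * Complex.exp (-(thA y t * Complex.I)) := by
  obtain ⟨r, hr, h⟩ := thA_polar hy t
  refine ⟨r, hr, ?_⟩
  have := congrArg (starRingEnd ℂ) h
  rw [map_mul, ← Complex.exp_conj] at this
  simpa [sub_eq_add_neg] using this

lemma hasSum_thA_one {y : ℝ} (hy : 0 < y) (p : ℝ) :
    HasSum (fun n : ℕ => thA y (p + n) - thA y (p + 1 + n)) (thA y p) := by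
  rw [hasSum_iff_tendsto_nat_of_nonneg]
  · have : ∀ N : ℕ, ∑ i ∈ Finset.range N, (thA y (p + i) - thA y (p + 1 + i))
        = thA y p - thA y (p + N) := by
      intro N
      have := Finset.sum_range_sub' (fun i : ℕ => thA y (p + i)) N
      simp only [Nat.cast_zero, add_zero] at this
      rw [← this]
      refine Finset.sum_congr rfl fun i _ => ?_
      push_cast; congr 2; ring
    simp_rw [this]
    simpa using (thA_tendsto hy p).const_sub (thA y p)
  · intro n
    have := (thA_anti hy).antitone (show p + (n:ℝ) ≤ p + 1 + n by linarith)
    linarith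

lemma summable_thA_nat {y : ℝ} (hy : 0 < y) (p : ℝ) (m : ℕ) :
    Summable (fun n : ℕ => thA y (p + n) - thA y (p + m + n)) := by
  induction m with
  | zero => simp
  | succ m ih =>
    have := ih.add (hasSum_thA_one hy (p + m)).summable
    refine this.congr fun n => ?_
    push_cast
    rw [show p + (m:ℝ) + 1 + n = p + (m + 1) + n by ring]; ring

lemma summable_thA_le {y : ℝ} (hy : 0 < y) {p q : ℝ} (h : p ≤ q) :
    Summable (fun n : ℕ => thA y (p + n) - thA y (q + n)) := by
  obtain ⟨m, hm⟩ := exists_nat_ge (q - p)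
  refine Summable.of_nonneg_of_le (fun n => ?_) (fun n => ?_) (summable_thA_nat hy p m)
  · have := (thA_anti hy).antitone (show p + (n:ℝ) ≤ q + n by linarith)
    linarith
  · have := (thA_anti hy).antitone (show q + (n:ℝ) ≤ p + m + n by linarith)
    linarith

lemma summable_thA {y : ℝ} (hy : 0 < y) (p q : ℝ) :
    Summable (fun n : ℕ => thA y (p + n) - thA y (q + n)) := by
  rcases le_total p q with h | h
  · exact summable_thA_le hy h
  · refine (summable_thA_le hy h).neg.congr fun n => ?_
    simp

noncomputable def UA (y p : ℝ) : ℝ := ∑' n : ℕ, (thA y (p + n) - thA y (0 + n))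

lemma hasSum_UA {y : ℝ} (hy : 0 < y) (p q : ℝ) :
    HasSum (fun n : ℕ => thA y (p + n) - thA y (q + n)) (UA y p - UA y q) := by
  have := (summable_thA hy p 0).hasSum.sub (summable_thA hy q 0).hasSum
  refine this.congr_fun ?_ |> fun h => h
  intro n; ring

lemma UA_anti {y : ℝ} (hy : 0 < y) : StrictAnti (UA y) := by
  intro p q hpq
  refine Summable.tsum_lt_tsum (i := 0) (fun n => ?_) ?_ (summable_thA hy q 0) (summable_thA hy p 0)
  · have := (thA_anti hy).antitone (show p + (n:ℝ) ≤ q + n by linarith)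
    show _ - _ ≤ _ - _
    linarith
  · have := thA_anti hy (show p + ((0:ℕ):ℝ) < q + ((0:ℕ):ℝ) by linarith)
    show _ - _ < _ - _
    linarith

lemma UA_step {y : ℝ} (hy : 0 < y) (p : ℝ) : UA y p - UA y (p + 1) = thA y p :=
  (hasSum_UA hy p (p + 1)).unique (hasSum_thA_one hy p)

lemma norm_exp_prod {y : ℝ} (hy : 0 < y) (p q : ℝ) (N : ℕ) :
    ∃ r : ℝ, 0 < r ∧ (∏ j ∈ Finset.range N, ((p - y * Complex.I : ℂ) + j)) *
      (∏ j ∈ Finset.range N, ((q + y * Complex.I : ℂ) + j)) = r *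
      Complex.exp (-((∑ j ∈ Finset.range N, (thA y (p + j) - thA y (q + j)) : ℝ) * Complex.I)) := by
  induction N with
  | zero => exact ⟨1, one_pos, by simp⟩
  | succ N ih =>
    obtain ⟨r, hr, h⟩ := ih
    obtain ⟨r1, hr1, h1⟩ := thA_polar_conj hy (p + N)
    obtain ⟨r2, hr2, h2⟩ := thA_polar hy (q + N)
    refine ⟨r * r1 * r2, by positivity, ?_⟩
    rw [Finset.prod_range_succ, Finset.prod_range_succ, Finset.sum_range_succ]
    have e1 : (p - y * Complex.I : ℂ) + N = ((p + N : ℝ) : ℂ) - y * Complex.I := by push_cast; ring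
    have e2 : (q + y * Complex.I : ℂ) + N = ((q + N : ℝ) : ℂ) + y * Complex.I := by push_cast; ring
    rw [e1, e2, h1, h2]
    calc _ = ((∏ j ∈ Finset.range N, ((p - y * Complex.I : ℂ) + j)) *
      (∏ j ∈ Finset.range N, ((q + y * Complex.I : ℂ) + j))) * (r1 * r2) *
        (Complex.exp (-(thA y (p + N) * Complex.I)) * Complex.exp (thA y (q + N) * Complex.I)) := by ring
      _ = r * (r1 * r2) * (Complex.exp (-((∑ j ∈ Finset.range N, (thA y (p + j) - thA y (q + j)) : ℝ) * Complex.I)) *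
        (Complex.exp (-(thA y (p + N) * Complex.I)) * Complex.exp (thA y (q + N) * Complex.I))) := by
          rw [h]; ring
      _ = _ := by
        rw [← Complex.exp_add, ← Complex.exp_add]
        push_cast
        congr 1
        · ring
        · congr 1; ring

lemma Gamma_ne_of_im {z : ℂ} (h : z.im ≠ 0) : Complex.Gamma z ≠ 0 := by
  apply Complex.Gamma_ne_zero
  rintro m rfl
  simp at h

/-- Polar form of the product of reciprocal Gammas. -/
lemma invGamma_polar {y : ℝ} (hy : 0 < y) (p q : ℝ) :
    ∃ r : ℝ, 0 < r ∧ (Complex.Gamma (p - y * Complex.I))⁻¹ * (Complex.Gamma (q + y * Complex.I))⁻¹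
      = r * Complex.exp (-((UA y p - UA y q : ℝ) * Complex.I)) := by
  set S : ℕ → ℝ := fun N => ∑ j ∈ Finset.range N, (thA y (p + j) - thA y (q + j)) with hS
  have hSlim : Tendsto (fun n => S (n + 1)) atTop (𝓝 (UA y p - UA y q)) :=
    ((hasSum_UA hy p q).tendsto_sum_nat).comp (tendsto_add_atTop_nat 1)
  have hlim : Tendsto (fun n => Complex.GammaSeq (p - y * Complex.I) n *
      Complex.GammaSeq (q + y * Complex.I) n * Complex.exp (-((S (n+1) : ℝ) * Complex.I))) atTop
      (𝓝 (Complex.Gamma (p - y * Complex.I) * Complex.Gamma (q + y * Complex.I) *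
        Complex.exp (-((UA y p - UA y q : ℝ) * Complex.I)))) := by
    refine ((Complex.GammaSeq_tendsto_Gamma _).mul (Complex.GammaSeq_tendsto_Gamma _)).mul ?_
    refine (Complex.continuous_exp.tendsto _).comp ?_
    refine Tendsto.neg ?_
    exact ((Complex.continuous_ofReal.tendsto _).comp hSlim).mul_const _
  have hreal : ∀ᶠ n : ℕ in atTop, ∃ r : ℝ, 0 ≤ r ∧ Complex.GammaSeq (p - y * Complex.I) n *
      Complex.GammaSeq (q + y * Complex.I) n * Complex.exp (-((S (n+1) : ℝ) * Complex.I)) = r := by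
    filter_upwards [eventually_gt_atTop 0] with n hn
    obtain ⟨r, hr, h⟩ := norm_exp_prod hy p q (n + 1)
    refine ⟨(n:ℝ) ^ (p + q) * (n.factorial:ℝ) ^ 2 / r, by positivity, ?_⟩
    have hn' : (n : ℂ) ≠ 0 := by exact_mod_cast hn.ne'
    unfold Complex.GammaSeq
    rw [div_mul_div_comm, h]
    have e : (n : ℂ) ^ (p - y * Complex.I) * n.factorial * ((n : ℂ) ^ (q + y * Complex.I) * n.factorial)
      = (n : ℂ) ^ ((p + q : ℝ) : ℂ) * (n.factorial : ℂ) ^ 2 := by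
      have : (n : ℂ) ^ ((p + q : ℝ) : ℂ) = (n : ℂ) ^ (p - y * Complex.I) * (n : ℂ) ^ (q + y * Complex.I) := by
        rw [← Complex.cpow_add _ _ hn']; congr 1; push_cast; ring
      rw [this]; ring
    rw [e]
    have hr' : (r : ℂ) ≠ 0 := by exact_mod_cast hr.ne'
    push_cast
    rw [Complex.ofReal_cpow (by positivity)]
    push_cast
    have := Complex.exp_ne_zero (-((S (n+1) : ℝ) * Complex.I))
    simp only [hS] at this ⊢
    push_cast at this ⊢
    field_simp
  set L := Complex.Gamma (p - y * Complex.I) * Complex.Gamma (q + y * Complex.I) *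
        Complex.exp (-((UA y p - UA y q : ℝ) * Complex.I)) with hL
  have hLne : L ≠ 0 := by
    refine mul_ne_zero (mul_ne_zero ?_ ?_) (Complex.exp_ne_zero _)
    · exact Gamma_ne_of_im (by simpa using hy.ne')
    · exact Gamma_ne_of_im (by simpa using hy.ne')
  have him : L.im = 0 := by
    refine tendsto_nhds_unique ((Complex.continuous_im.tendsto _).comp hlim) ?_
    refine tendsto_const_nhds.congr' ?_
    filter_upwards [hreal] with n ⟨r, _, h⟩
    simp only [Function.comp]
    rw [h]; simp
  have hre : 0 ≤ L.re := by
    refine ge_of_tendsto ((Complex.continuous_re.tendsto _).comp hlim) ?_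
    filter_upwards [hreal] with n ⟨r, hr, h⟩
    simp only [Function.comp]
    rw [h]; simpa using hr
  have hLr : L = (L.re : ℂ) := Complex.ext rfl (by simp [him])
  have hpos : 0 < L.re := lt_of_le_of_ne hre (fun h => hLne (by rw [hLr, ← h]; simp))
  refine ⟨L.re⁻¹, by positivity, ?_⟩
  rw [Complex.ofReal_inv, ← hLr, hL]
  have h1 : Complex.Gamma (p - y * Complex.I) ≠ 0 := Gamma_ne_of_im (by simpa using hy.ne')
  have h2 : Complex.Gamma (q + y * Complex.I) ≠ 0 := Gamma_ne_of_im (by simpa using hy.ne')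
  have h3 := Complex.exp_ne_zero (-((UA y p - UA y q : ℝ) * Complex.I))
  field_simp

/-- Decay of `Γ` on vertical lines. -/
lemma norm_Gamma_le (p : ℝ) {y1 y2 : ℝ} (h1 : y1 ≠ 0) (h : |y1| ≤ |y2|) :
    ‖Complex.Gamma (p + y2 * Complex.I)‖ ≤ ‖Complex.Gamma (p + y1 * Complex.I)‖ := by
  refine le_of_tendsto_of_tendsto (Complex.GammaSeq_tendsto_Gamma _).norm
    (Complex.GammaSeq_tendsto_Gamma _).norm ?_
  filter_upwards [eventually_gt_atTop 0] with n hn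
  unfold Complex.GammaSeq
  simp only [norm_div, norm_mul, norm_prod, Complex.norm_natCast_cpow_of_pos hn]
  have hre : ∀ y : ℝ, (p + y * Complex.I : ℂ).re = p := by intro y; simp
  rw [hre, hre]
  have hpos : ∀ j ∈ Finset.range (n+1), 0 < ‖(p + y1 * Complex.I : ℂ) + j‖ := by
    intro j _
    rw [norm_pos_iff]
    intro h0
    have := congrArg Complex.im h0
    simp at this; exact h1 this
  refine div_le_div_of_nonneg_left (by positivity) (Finset.prod_pos hpos) ?_
  refine Finset.prod_le_prod (fun j hj => (hpos j hj).le) fun j _ => ?_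
  rw [Complex.norm_eq_sqrt_sq_add_sq, Complex.norm_eq_sqrt_sq_add_sq]
  apply Real.sqrt_le_sqrt
  have := sq_le_sq.2 h
  simp
  exact this

noncomputable def Efun (σ : ℝ) (w : ℂ) : ℂ :=
  Complex.cos (Real.pi * w) * ((Complex.Gamma (σ - w))⁻¹ * (Complex.Gamma (σ + w))⁻¹)

noncomputable def PhiA (σ x y : ℝ) : ℝ :=
  (UA y (1/2 - x) - UA y (1/2 + x)) + (UA y (σ - x) - UA y (σ + x))

lemma Efun_differentiable (σ : ℝ) : Differentiable ℂ (Efun σ) := by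
  have h1 : Differentiable ℂ (fun w : ℂ => (Complex.Gamma (σ - w))⁻¹) :=
    Complex.differentiable_one_div_Gamma.comp (f := fun w : ℂ => (σ - w : ℂ)) (by fun_prop)
  have h2 : Differentiable ℂ (fun w : ℂ => (Complex.Gamma (σ + w))⁻¹) :=
    Complex.differentiable_one_div_Gamma.comp (f := fun w : ℂ => (σ + w : ℂ)) (by fun_prop)
  have h3 : Differentiable ℂ (fun w : ℂ => Complex.cos (Real.pi * w)) :=
    Complex.differentiable_cos.comp (f := fun w : ℂ => (Real.pi * w : ℂ)) (by fun_prop)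
  exact h3.mul (h1.mul h2)

lemma Efun_continuous (σ : ℝ) : Continuous (Efun σ) := (Efun_differentiable σ).continuous

lemma cos_eq_Gamma (w : ℂ) : Complex.cos (Real.pi * w) =
    Real.pi * ((Complex.Gamma ((1/2 : ℝ) - w))⁻¹ * (Complex.Gamma ((1/2 : ℝ) + w))⁻¹) := by
  have h := Complex.Gamma_mul_Gamma_one_sub ((1/2 : ℝ) + w)
  have e1 : (1 : ℂ) - (((1/2 : ℝ) : ℂ) + w) = ((1/2 : ℝ) : ℂ) - w := by push_cast; ring
  have e2 : (Real.pi : ℂ) * (((1/2 : ℝ) : ℂ) + w) = Real.pi * w + Real.pi / 2 := by push_cast; ring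
  rw [e1, e2, Complex.sin_add_pi_div_two] at h
  rw [← mul_inv, mul_comm (Complex.Gamma ((1/2 : ℝ) - w)), h, inv_div]
  have : (Real.pi : ℂ) ≠ 0 := by exact_mod_cast Real.pi_ne_zero
  field_simp

lemma Efun_polar (σ x : ℝ) {y : ℝ} (hy : 0 < y) :
    ∃ r : ℝ, 0 < r ∧ Efun σ (x + y * Complex.I) = r * Complex.exp (-(PhiA σ x y * Complex.I)) := by
  obtain ⟨r1, hr1, h1⟩ := invGamma_polar hy (1/2 - x) (1/2 + x)
  obtain ⟨r2, hr2, h2⟩ := invGamma_polar hy (σ - x) (σ + x)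
  refine ⟨Real.pi * r1 * r2, by positivity, ?_⟩
  unfold Efun
  rw [cos_eq_Gamma]
  have e1 : ∀ a : ℝ, (a : ℂ) - (x + y * Complex.I) = ((a - x : ℝ) : ℂ) - y * Complex.I := by
    intro a; push_cast; ring
  have e2 : ∀ a : ℝ, (a : ℂ) + (x + y * Complex.I) = ((a + x : ℝ) : ℂ) + y * Complex.I := by
    intro a; push_cast; ring
  rw [e1, e1, e2, e2, h1, h2]
  unfold PhiA
  calc _ = (Real.pi * r1 * r2 : ℂ) * (Complex.exp (-((UA y (1/2-x) - UA y (1/2+x) : ℝ) * Complex.I)) *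
      Complex.exp (-((UA y (σ-x) - UA y (σ+x) : ℝ) * Complex.I))) := by ring
    _ = _ := by
      rw [← Complex.exp_add]
      push_cast
      congr 2; ring

lemma Efun_re_im (σ x : ℝ) {y : ℝ} (hy : 0 < y) :
    ∃ r : ℝ, 0 < r ∧ (Efun σ (x + y * Complex.I)).re = r * Real.cos (PhiA σ x y) ∧
      (Efun σ (x + y * Complex.I)).im = -(r * Real.sin (PhiA σ x y)) := by
  obtain ⟨r, hr, h⟩ := Efun_polar σ x hy
  refine ⟨r, hr, ?_⟩
  rw [← neg_mul, ← Complex.ofReal_neg, Complex.exp_mul_I, ← Complex.ofReal_cos,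
    ← Complex.ofReal_sin] at h
  rw [h, Real.cos_neg, Real.sin_neg]
  constructor <;>
  simp only [Complex.add_re, Complex.mul_re, Complex.ofReal_re, Complex.ofReal_im, Complex.I_re,
      Complex.I_im, Complex.add_im, Complex.mul_im] <;> ring

lemma PhiA_strictMono (σ : ℝ) {y : ℝ} (hy : 0 < y) {x x' : ℝ} (h : x < x') :
    PhiA σ x y < PhiA σ x' y := by
  have a1 := UA_anti hy (show 1/2 - x' < 1/2 - x by linarith)
  have a2 := UA_anti hy (show 1/2 + x < 1/2 + x' by linarith)
  have a3 := UA_anti hy (show σ - x' < σ - x by linarith)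
  have a4 := UA_anti hy (show σ + x < σ + x' by linarith)
  unfold PhiA; linarith

lemma PhiA_zero (σ y : ℝ) : PhiA σ 0 y = 0 := by
  unfold PhiA; simp

lemma norm_cos_ge (x y : ℝ) : Real.sinh (Real.pi * y) ≤ ‖Complex.cos (Real.pi * (x + y * Complex.I))‖ := by
  have e : Complex.cos (Real.pi * (x + y * Complex.I)) =
      ((Real.cos (Real.pi * x) * Real.cosh (Real.pi * y) : ℝ) : ℂ) -
       ((Real.sin (Real.pi * x) * Real.sinh (Real.pi * y) : ℝ) : ℂ) * Complex.I := by
    rw [mul_add, ← mul_assoc, Complex.cos_add, Complex.cos_mul_I, Complex.sin_mul_I]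
    push_cast; ring
  have hn : ‖Complex.cos (Real.pi * (x + y * Complex.I))‖ ^ 2 =
     (Real.cos (Real.pi * x) * Real.cosh (Real.pi * y)) ^ 2 + (Real.sin (Real.pi * x) * Real.sinh (Real.pi * y)) ^ 2 := by
    rw [e, Complex.sq_norm, Complex.normSq_apply]
    simp only [Complex.sub_re, Complex.sub_im, Complex.mul_re, Complex.mul_im, Complex.ofReal_re,
      Complex.ofReal_im, Complex.I_re, Complex.I_im]
    ring
  apply le_of_sq_le_sq _ (norm_nonneg _) |> fun h => h
  rw [hn, mul_pow, mul_pow, Real.cosh_sq]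
  nlinarith [Real.sin_sq_add_cos_sq (Real.pi * x), sq_nonneg (Real.cos (Real.pi * x)), sq_nonneg (Real.sinh (Real.pi * y))]

lemma Efun_growth (σ C : ℝ) (l r : ℝ) :
    ∃ Y : ℝ, 1 ≤ Y ∧ ∀ x ∈ Set.Icc l r, ∀ y, Y ≤ y → C < ‖Efun σ (x + y * Complex.I)‖ := by
  set g : ℝ → ℝ := fun x => ‖(Complex.Gamma (σ - (x + Complex.I)))⁻¹ * (Complex.Gamma (σ + (x + Complex.I)))⁻¹‖
  have hg : Continuous g := by
    have h1 : Continuous (fun x : ℝ => (Complex.Gamma (σ - (x + Complex.I)))⁻¹) :=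
      Complex.differentiable_one_div_Gamma.continuous.comp (by fun_prop)
    have h2 : Continuous (fun x : ℝ => (Complex.Gamma (σ + (x + Complex.I)))⁻¹) :=
      Complex.differentiable_one_div_Gamma.continuous.comp (by fun_prop)
    exact (h1.mul h2).norm
  have hgpos : ∀ x, 0 < g x := by
    intro x
    rw [norm_pos_iff]
    refine mul_ne_zero (inv_ne_zero (Gamma_ne_of_im ?_)) (inv_ne_zero (Gamma_ne_of_im ?_)) <;> simp
  obtain ⟨m, hm, hgm⟩ : ∃ m > 0, ∀ x ∈ Set.Icc l r, m ≤ g x := by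
    rcases (Set.Icc l r).eq_empty_or_nonempty with h | h
    · exact ⟨1, one_pos, by simp [h]⟩
    · obtain ⟨x0, _, hx0⟩ := isCompact_Icc.exists_isMinOn h hg.continuousOn
      exact ⟨g x0, hgpos x0, fun x hx => hx0 hx⟩
  refine ⟨max 1 (|C| / m + 1), le_max_left _ _, fun x hx y hy => ?_⟩
  have hy1 : 1 ≤ y := (le_max_left _ _).trans hy
  have hy2 : |C| / m + 1 ≤ y := (le_max_right _ _).trans hy
  have hsinh : y ≤ Real.sinh (Real.pi * y) := by
    have h1 : Real.pi * y ≤ Real.sinh (Real.pi * y) := Real.self_le_sinh_iff.2 (by positivity)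
    nlinarith [Real.pi_gt_three]
  have hcos := hsinh.trans (norm_cos_ge x y)
  have hG : g x ≤ ‖(Complex.Gamma (σ - (x + y * Complex.I)))⁻¹ * (Complex.Gamma (σ + (x + y * Complex.I)))⁻¹‖ := by
    simp only [g, norm_mul, norm_inv]
    have k1 := norm_Gamma_le (σ - x) (y1 := -1) (y2 := -y) (by norm_num)
      (by rw [abs_neg, abs_neg, abs_one, abs_of_pos (by linarith)]; exact hy1)
    have k2 := norm_Gamma_le (σ + x) (y1 := 1) (y2 := y) (by norm_num)
      (by rw [abs_one, abs_of_pos (by linarith)]; exact hy1)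
    have e1 : (σ : ℂ) - (x + y * Complex.I) = ((σ - x : ℝ) : ℂ) + ((-y : ℝ) : ℂ) * Complex.I := by push_cast; ring
    have e2 : (σ : ℂ) - (x + Complex.I) = ((σ - x : ℝ) : ℂ) + ((-1 : ℝ) : ℂ) * Complex.I := by push_cast; ring
    have e3 : (σ : ℂ) + (x + y * Complex.I) = ((σ + x : ℝ) : ℂ) + ((y : ℝ) : ℂ) * Complex.I := by push_cast; ring
    have e4 : (σ : ℂ) + (x + Complex.I) = ((σ + x : ℝ) : ℂ) + ((1 : ℝ) : ℂ) * Complex.I := by push_cast; ring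
    rw [← e1, ← e2] at k1
    rw [← e3, ← e4] at k2
    have p1 : 0 < ‖Complex.Gamma (σ - (x + y * Complex.I))‖ := by
      rw [norm_pos_iff]; apply Gamma_ne_of_im; simp; linarith
    have p2 : 0 < ‖Complex.Gamma (σ + (x + y * Complex.I))‖ := by
      rw [norm_pos_iff]; apply Gamma_ne_of_im; simp; linarith
    gcongr
  unfold Efun
  rw [norm_mul]
  have hgx := (hgm x hx).trans hG
  calc C ≤ |C| := le_abs_self C
    _ = |C| / m * m := by field_simp
    _ < y * m := by apply mul_lt_mul_of_pos_right _ hm; linarith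
    _ ≤ _ := mul_le_mul hcos hgx hm.le (norm_nonneg _)

/-- Topological lemma. -/
lemma exists_level (E : ℂ → ℂ) (hE : Continuous E) {l r C : ℝ} (hlr : l < r)
    (hl : ∀ y : ℝ, 0 < y → 0 < (E (l + y * Complex.I)).im)
    (hr : ∀ y : ℝ, 0 < y → (E (r + y * Complex.I)).im < 0)
    (hmono : ∀ y : ℝ, 0 < y → ∀ x x' : ℝ, l ≤ x → x < x' → x' ≤ r →
      (E (x + y * Complex.I)).im ≤ 0 → (E (x' + y * Complex.I)).im < 0)
    (hpos : ∀ y : ℝ, 0 < y → ∀ x : ℝ, l ≤ x → x ≤ r → (E (x + y * Complex.I)).im = 0 →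
      0 < (E (x + y * Complex.I)).re)
    (hreal : ∀ x : ℝ, l ≤ x → x ≤ r → (E x).re < C)
    {Y : ℝ} (hY : 1 ≤ Y) (hYC : ∀ x ∈ Set.Icc l r, C < ‖E (x + Y * Complex.I)‖) :
    ∃ x y : ℝ, l < x ∧ x < r ∧ 0 < y ∧ E (x + y * Complex.I) = C := by
  have hc2 : Continuous (fun z : ℝ × ℝ => E (z.2 + z.1 * Complex.I)) := by fun_prop
  have hex : ∀ y : ℝ, 0 < y → ∃ x, l < x ∧ x < r ∧ (E (x + y * Complex.I)).im = 0 := by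
    intro y hy
    have hc : ContinuousOn (fun x : ℝ => (E (x + y * Complex.I)).im) (Set.Icc l r) := by
      apply Continuous.continuousOn; fun_prop
    obtain ⟨x, hx, hx0⟩ := intermediate_value_Icc' hlr.le hc (show (0:ℝ) ∈ Set.Icc _ _ from
      ⟨(hr y hy).le, (hl y hy).le⟩)
    refine ⟨x, lt_of_le_of_ne hx.1 ?_, lt_of_le_of_ne hx.2 ?_, hx0⟩
    · rintro rfl; exact (hl y hy).ne' hx0
    · rintro rfl; exact (hr y hy).ne hx0
  choose! X hXl hXr hX0 using hex
  have hXcont : ContinuousOn X (Set.Ioi 0) := by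
    intro y0 hy0
    apply ContinuousAt.continuousWithinAt
    have hy0 : 0 < y0 := hy0
    rw [ContinuousAt, tendsto_order]
    constructor
    · intro a ha
      -- pick a point between max a l and X y0
      obtain ⟨b, hb1, hb2⟩ := exists_between (max_lt ha (hXl y0 hy0))
      have hbl : l < b := (le_max_right _ _).trans_lt hb1
      have hba : a < b := (le_max_left _ _).trans_lt hb1
      have hbpos : 0 < (E (b + y0 * Complex.I)).im := by
        by_contra hcon
        have := hmono y0 hy0 b (X y0) hbl.le hb2 (hXr y0 hy0).le (not_lt.1 hcon)
        exact this.ne (hX0 y0 hy0)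
      have hcb : Continuous (fun y : ℝ => (E (b + y * Complex.I)).im) := by fun_prop
      have hev := hcb.continuousAt.eventually_const_lt hbpos
      filter_upwards [hev, lt_mem_nhds hy0] with y hy1 hy2
      by_contra hcon
      have hXb : X y < b := (not_lt.1 hcon).trans_lt hba
      have := hmono y hy2 (X y) b (hXl y hy2).le hXb (hb2.trans (hXr y0 hy0)).le (hX0 y hy2).le
      exact lt_asymm this hy1
    · intro a ha
      obtain ⟨b, hb1, hb2⟩ := exists_between (lt_min ha (hXr y0 hy0))
      have hbl : b < r := hb2.trans_le (min_le_right _ _)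
      have hba : b < a := hb2.trans_le (min_le_left _ _)
      have hbneg := hmono y0 hy0 (X y0) b (hXl y0 hy0).le hb1 hbl.le (hX0 y0 hy0).le
      have hcb : Continuous (fun y : ℝ => (E (b + y * Complex.I)).im) := by fun_prop
      have hev := hcb.continuousAt.eventually_lt_const hbneg
      filter_upwards [hev, lt_mem_nhds hy0] with y hy1 hy2
      by_contra hcon
      have hXb : b < X y := hba.trans_le (not_lt.1 hcon)
      have := hmono y hy2 b (X y) ((hXl y0 hy0).trans hb1).le hXb (hXr y hy2).le hy1.le
      exact this.ne (hX0 y hy2)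
  -- small y
  have hsmall : ∀ᶠ y : ℝ in 𝓝 0, ∀ x ∈ Set.Icc l r, (E (x + y * Complex.I)).re < C := by
    apply isCompact_Icc.eventually_forall_of_forall_eventually
    intro x hx
    have hcc : Continuous (fun z : ℝ × ℝ => (E (z.2 + z.1 * Complex.I)).re) := by fun_prop
    refine hcc.continuousAt.eventually_lt_const ?_
    simpa using hreal x hx.1 hx.2
  obtain ⟨y0, ⟨hy0C, hy01⟩, hy0⟩ : ∃ y : ℝ, ((∀ x ∈ Set.Icc l r, (E (x + y * Complex.I)).re < C) ∧ y < 1) ∧ 0 < y := by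
    have h1 := (hsmall.and (gt_mem_nhds (show (0:ℝ) < 1 by norm_num))).filter_mono
      (nhdsWithin_le_nhds (s := Set.Ioi 0))
    exact (h1.and self_mem_nhdsWithin).exists
  have hh : ContinuousOn (fun y => (E (X y + y * Complex.I)).re) (Set.Icc y0 Y) := by
    have hX' : ContinuousOn X (Set.Icc y0 Y) := hXcont.mono fun y hy => hy0.trans_le hy.1
    have : ContinuousOn (fun y : ℝ => ((y, X y) : ℝ × ℝ)) (Set.Icc y0 Y) := continuousOn_id.prodMk hX'
    exact (Complex.continuous_re.comp hc2).comp_continuousOn this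
  have hYpos : 0 < Y := by linarith
  have hendY : C < (E (X Y + Y * Complex.I)).re := by
    have h1 := hYC (X Y) ⟨(hXl Y hYpos).le, (hXr Y hYpos).le⟩
    have h2 := hpos Y hYpos (X Y) (hXl Y hYpos).le (hXr Y hYpos).le (hX0 Y hYpos)
    have h3 : E (X Y + Y * Complex.I) = ((E (X Y + Y * Complex.I)).re : ℂ) :=
      Complex.ext rfl (by simp [hX0 Y hYpos])
    rw [h3, Complex.norm_real, Real.norm_of_nonneg h2.le] at h1
    exact h1
  obtain ⟨y, hy, hyC⟩ := intermediate_value_Icc (by linarith) hh (show C ∈ Set.Icc _ _ from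
    ⟨(hy0C (X y0) ⟨(hXl y0 hy0).le, (hXr y0 hy0).le⟩).le, hendY.le⟩)
  have hyp : 0 < y := hy0.trans_le hy.1
  refine ⟨X y, y, hXl y hyp, hXr y hyp, hyp, Complex.ext ?_ ?_⟩
  · simpa using hyC
  · simpa using hX0 y hyp

lemma UA_le {y : ℝ} (hy : 0 < y) {p q : ℝ} (h : p ≤ q) : UA y q ≤ UA y p := (UA_anti hy).antitone h

lemma UA_step' {y : ℝ} (hy : 0 < y) {p q : ℝ} (h : q = p + 1) : UA y p - UA y q = thA y p := by
  rw [h]; exact UA_step hy p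

/-- cosine part at x = 1 -/
lemma UA_half_one {y : ℝ} (hy : 0 < y) : UA y (1/2 - 1) - UA y (1/2 + 1) = Real.pi := by
  have a := UA_step' hy (show (1/2:ℝ) = (1/2 - 1) + 1 by norm_num)
  have b := UA_step' hy (show (1/2 + 1:ℝ) = (1/2) + 1 by norm_num)
  have c := thA_neg y (1/2)
  rw [show (-(1/2) : ℝ) = 1/2 - 1 by norm_num] at c
  linarith

lemma UA_half_three {y : ℝ} (hy : 0 < y) : UA y (1/2 - 3/2) - UA y (1/2 + 3/2) = 3 * Real.pi / 2 := by
  have a := UA_step' hy (show (0:ℝ) = (1/2 - 3/2) + 1 by norm_num)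
  have b := UA_step' hy (show (1:ℝ) = (0) + 1 by norm_num)
  have b' := UA_step' hy (show (1/2 + 3/2:ℝ) = (1) + 1 by norm_num)
  have c := thA_neg y 1
  rw [show (-1 : ℝ) = 1/2 - 3/2 by norm_num] at c
  have d := thA_zero y
  linarith

lemma Phi_lt_two_pi {σ x y : ℝ} (hσ : 1/2 < σ) (hx1 : x ≤ 1) (hx0 : 0 < x) (hy : 0 < y) :
    PhiA σ x y < 2 * Real.pi := by
  have h : PhiA σ x y ≤ PhiA σ 1 y := by
    rcases hx1.eq_or_lt with rfl | h
    · exact le_rfl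
    · exact (PhiA_strictMono σ hy h).le
  refine h.trans_lt ?_
  unfold PhiA
  have a := UA_half_one hy
  -- T(σ-1, σ+1) = θ(σ-1)+θ(σ) < θ(-1/2)+θ(1/2)
  have b := UA_step' hy (show σ = (σ - 1) + 1 by ring)
  have c := UA_step' hy (show σ + 1 = σ + 1 by ring)
  have d := thA_anti hy hσ
  have e := thA_anti hy (show -(1/2) < σ - 1 by linarith)
  have f := thA_neg y (1/2)
  linarith

lemma Phi_pos {σ x y : ℝ} (hx0 : 0 < x) (hy : 0 < y) : 0 < PhiA σ x y := by
  have := PhiA_strictMono σ hy hx0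
  rwa [PhiA_zero] at this

lemma Phi_left_i {σ y : ℝ} (hσ : 1/2 < σ) (hy : 0 < y) : Real.pi < PhiA σ σ y := by
  unfold PhiA
  have a := UA_step' hy (show (1:ℝ) = 0 + 1 by ring)
  have b := thA_zero y
  have c := UA_anti hy (show 1/2 - σ < 0 by linarith)
  have d := UA_le hy (show 1 ≤ 1/2 + σ by linarith)
  have e := UA_le hy (show 1 ≤ σ + σ by linarith)
  rw [sub_self]
  linarith

lemma Phi_left_ii {σ y : ℝ} (hy : 0 < y) : Real.pi < PhiA σ 1 y := by
  unfold PhiA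
  have a := UA_half_one hy
  have e := UA_anti hy (show σ - 1 < σ + 1 by linarith)
  linarith

lemma Phi_right_i {σ y : ℝ} (hσ : 1/2 < σ) (hσ1 : σ ≤ 1) (hy : 0 < y) :
    2 * Real.pi < PhiA σ (σ + 1/2) y ∧ PhiA σ (σ + 1/2) y < 3 * Real.pi := by
  unfold PhiA
  have a := UA_half_one hy
  have a3 := UA_half_three hy
  have c1 := UA_le hy (show 1/2 - (σ + 1/2) ≤ 1/2 - 1 by linarith)
  have c2 := UA_le hy (show 1/2 + 1 ≤ 1/2 + (σ + 1/2) by linarith)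
  have c3 := UA_le hy (show 1/2 - 3/2 ≤ 1/2 - (σ + 1/2) by linarith)
  have c4 := UA_le hy (show 1/2 + (σ + 1/2) ≤ 1/2 + 3/2 by linarith)
  have e : σ - (σ + 1/2) = 1/2 - 1 := by ring
  rw [e]
  have d1 := UA_anti hy (show 1/2 + 1 < σ + (σ + 1/2) by linarith)
  have d2 := UA_le hy (show σ + (σ + 1/2) ≤ 1/2 + 1 + 1 by linarith)
  have d3 := UA_step hy (1/2 + 1)
  have d4 := thA_anti hy (show (0:ℝ) < 1/2 + 1 by norm_num)
  have d5 := thA_zero y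
  constructor <;> linarith

lemma Phi_right_ii {σ y : ℝ} (hσ : 1 ≤ σ) (hσ1 : σ < 3/2) (hy : 0 < y) :
    2 * Real.pi < PhiA σ (3/2) y ∧ PhiA σ (3/2) y < 3 * Real.pi := by
  unfold PhiA
  have a3 := UA_half_three hy
  -- T(σ-3/2, σ+3/2) = θ(σ-3/2)+θ(σ-1/2)+θ(σ+1/2)
  have b1 := UA_step' hy (show σ - 1/2 = (σ - 3/2) + 1 by ring)
  have b2 := UA_step' hy (show σ + 1/2 = (σ - 1/2) + 1 by ring)
  have b3 := UA_step' hy (show σ + 3/2 = (σ + 1/2) + 1 by ring)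
  have c1 := thA_anti hy (show σ - 3/2 < 0 by linarith)
  have c2 := thA_anti hy (show -1 < σ - 3/2 by linarith)
  have c3 := thA_anti hy (show 0 < σ - 1/2 by linarith)
  have c4 := thA_anti hy (show 1 < σ + 1/2 by linarith)
  have d := thA_zero y
  have d1 := thA_neg y 1
  have p1 := thA_pos y (σ - 1/2)
  have p2 := thA_pos y (σ + 1/2)
  constructor <;> linarith

lemma sin_neg_of {t : ℝ} (h1 : Real.pi < t) (h2 : t < 2 * Real.pi) : Real.sin t < 0 := by
  rw [← Real.sin_sub_two_pi]
  exact Real.sin_neg_of_neg_of_neg_pi_lt (by linarith) (by linarith)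

lemma sin_pos_of {t : ℝ} (h1 : 2 * Real.pi < t) (h2 : t < 3 * Real.pi) : 0 < Real.sin t := by
  rw [← Real.sin_sub_two_pi]
  exact Real.sin_pos_of_pos_of_lt_pi (by linarith) (by linarith)

/-- No nonreal solutions with `0 < Re w ≤ 1`, upper half plane. -/
lemma Efun_ne_upper {σ x y C : ℝ} (hσ : 1/2 < σ) (hx1 : x ≤ 1) (hx0 : 0 < x) (hy : 0 < y) (hC : 0 < C) :
    Efun σ (x + y * Complex.I) ≠ C := by
  intro h
  obtain ⟨r, hr, h1, h2⟩ := Efun_re_im σ x hy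
  rw [h] at h1 h2
  simp only [Complex.ofReal_re, Complex.ofReal_im] at h1 h2
  have hp := Phi_pos (σ := σ) hx0 hy
  have hl := Phi_lt_two_pi hσ hx1 hx0 hy
  have hs : Real.sin (PhiA σ x y) = 0 := by
    have : r * Real.sin (PhiA σ x y) = 0 := by linarith
    exact (mul_eq_zero.1 this).resolve_left hr.ne'
  rcases lt_trichotomy (PhiA σ x y) Real.pi with h | h | h
  · exact (Real.sin_pos_of_pos_of_lt_pi hp h).ne' hs
  · rw [h, Real.cos_pi] at h1; linarith
  · exact (sin_neg_of h hl).ne hs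

lemma Efun_conj (σ : ℝ) (w : ℂ) : Efun σ (starRingEnd ℂ w) = starRingEnd ℂ (Efun σ w) := by
  unfold Efun
  rw [map_mul, map_mul, map_inv₀, map_inv₀, ← Complex.Gamma_conj, ← Complex.Gamma_conj, ← Complex.cos_conj]
  simp

lemma exists_complex {σ l r C : ℝ} (hlr : l < r)
    (hl : ∀ y : ℝ, 0 < y → Real.pi < PhiA σ l y ∧ PhiA σ l y < 2 * Real.pi)
    (hr : ∀ y : ℝ, 0 < y → 2 * Real.pi < PhiA σ r y ∧ PhiA σ r y < 3 * Real.pi)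
    (hreal : ∀ x : ℝ, l ≤ x → x ≤ r → (Efun σ x).re < C) :
    ∃ x y : ℝ, l < x ∧ x < r ∧ 0 < y ∧ Efun σ (x + y * Complex.I) = C := by
  obtain ⟨Y, hY, hYC⟩ := Efun_growth σ C l r
  have hrange : ∀ y : ℝ, 0 < y → ∀ x, l ≤ x → x ≤ r → Real.pi < PhiA σ x y ∧ PhiA σ x y < 3 * Real.pi := by
    intro y hy x hlx hxr
    have hm : Monotone (fun x => PhiA σ x y) := StrictMono.monotone fun a b h => PhiA_strictMono σ hy h
    exact ⟨(hl y hy).1.trans_le (hm hlx), (hm hxr).trans_lt (hr y hy).2⟩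
  refine exists_level (Efun σ) (Efun_continuous σ) hlr ?_ ?_ ?_ ?_ hreal hY
    (fun x hx => hYC x hx Y le_rfl)
  · intro y hy
    obtain ⟨ρ, hρ, -, h2⟩ := Efun_re_im σ l hy
    have := sin_neg_of (hl y hy).1 (hl y hy).2
    rw [h2]; nlinarith
  · intro y hy
    obtain ⟨ρ, hρ, -, h2⟩ := Efun_re_im σ r hy
    have := sin_pos_of (hr y hy).1 (hr y hy).2
    rw [h2]; nlinarith
  · intro y hy x x' hlx hxx' hxr h
    obtain ⟨ρ, hρ, -, h2⟩ := Efun_re_im σ x hy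
    obtain ⟨ρ', hρ', -, h2'⟩ := Efun_re_im σ x' hy
    have hph : 2 * Real.pi ≤ PhiA σ x y := by
      by_contra hcon
      have := sin_neg_of (hrange y hy x hlx (by linarith)).1 (not_le.1 hcon)
      rw [h2] at h
      nlinarith
    have h3 := PhiA_strictMono σ hy hxx'
    have := sin_pos_of (hph.trans_lt h3) (hrange y hy x' (by linarith) hxr).2
    rw [h2']; nlinarith
  · intro y hy x hlx hxr h
    obtain ⟨ρ, hρ, h1, h2⟩ := Efun_re_im σ x hy
    obtain ⟨k1, k2⟩ := hrange y hy x hlx hxr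
    have hs : Real.sin (PhiA σ x y) = 0 := by
      have : ρ * Real.sin (PhiA σ x y) = 0 := by linarith
      exact (mul_eq_zero.1 this).resolve_left hρ.ne'
    rcases lt_trichotomy (PhiA σ x y) (2 * Real.pi) with h | h | h
    · exact absurd hs (sin_neg_of k1 h).ne
    · rw [h1, h, Real.cos_two_pi]; linarith
    · exact absurd hs (sin_pos_of h k2).ne'

noncomputable def Er (σ x : ℝ) : ℝ :=
  Real.cos (Real.pi * x) * ((Real.Gamma (σ - x))⁻¹ * (Real.Gamma (σ + x))⁻¹)

lemma Efun_ofReal (σ x : ℝ) : Efun σ x = Er σ x := by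
  unfold Efun Er
  push_cast [← Complex.Gamma_ofReal]
  rfl

lemma Er_continuous (σ : ℝ) : Continuous (Er σ) := by
  have : Er σ = fun x : ℝ => (Efun σ x).re := by
    funext x; rw [Efun_ofReal]; simp
  rw [this]
  exact Complex.continuous_re.comp ((Efun_continuous σ).comp Complex.continuous_ofReal)

lemma Gamma_conv {p' p q q' : ℝ} (h0 : 0 < p') (h1 : p' ≤ p) (h2 : p' ≤ q) (hs : p + q = p' + q') :
    Real.Gamma p * Real.Gamma q ≤ Real.Gamma p' * Real.Gamma q' := by
  have hp : 0 < p := by linarith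
  have hq : 0 < q := by linarith
  have hq' : 0 < q' := by linarith
  rcases (show p' ≤ q' by linarith).eq_or_lt with h | h
  · have e1 : p = p' := by linarith
    have e2 : q = q' := by linarith
    rw [e1, e2]
  have hd : 0 < q' - p' := by linarith
  have hconv := Real.convexOn_log_Gamma
  set t := (q' - p) / (q' - p') with ht
  have ht0 : 0 ≤ t := div_nonneg (by linarith) hd.le
  have ht1 : 0 ≤ 1 - t := by
    rw [ht, sub_nonneg, div_le_one hd]; linarith
  have a := hconv.2 (Set.mem_Ioi.2 h0) (Set.mem_Ioi.2 hq') ht0 ht1 (by ring)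
  have b := hconv.2 (Set.mem_Ioi.2 h0) (Set.mem_Ioi.2 hq') ht1 ht0 (by ring)
  have e1 : t • p' + (1 - t) • q' = p := by
    simp only [smul_eq_mul, ht]; field_simp; ring
  have e2 : (1 - t) • p' + t • q' = q := by
    simp only [smul_eq_mul] at e1 ⊢
    linarith
  rw [e1] at a
  rw [e2] at b
  simp only [Function.comp, smul_eq_mul] at a b
  have g1 := Real.Gamma_pos_of_pos hp
  have g2 := Real.Gamma_pos_of_pos hq
  have g3 := Real.Gamma_pos_of_pos h0
  have g4 := Real.Gamma_pos_of_pos hq'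
  rw [← Real.log_le_log_iff (by positivity) (by positivity), Real.log_mul g1.ne' g2.ne',
    Real.log_mul g3.ne' g4.ne']
  linarith

/-- `E ≤ 0` on `[1/2, min σ 1]`. -/
lemma Er_nonpos {σ x : ℝ} (hx : 1/2 ≤ x) (hx1 : x ≤ 1) (hxσ : x ≤ σ) : Er σ x ≤ 0 := by
  unfold Er
  have h1 : Real.cos (Real.pi * x) ≤ 0 := by
    apply Real.cos_nonpos_of_pi_div_two_le_of_le <;> nlinarith [Real.pi_pos]
  have h2 : 0 ≤ Real.Gamma (σ - x) := Real.Gamma_nonneg_of_nonneg (by linarith)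
  have h3 : 0 ≤ Real.Gamma (σ + x) := Real.Gamma_nonneg_of_nonneg (by linarith)
  exact mul_nonpos_of_nonpos_of_nonneg h1 (by positivity)

lemma Er_lt {σ x : ℝ} (hσ : 1/2 < σ) (hσ2 : σ < 3/2) (hx : |1 - σ| < x) (hx1 : x ≤ 1) (hxσ : x ≤ σ) :
    Er σ x < Real.sin (Real.pi * (σ - 1/2)) / Real.Gamma (2 * (σ - 1/2)) := by
  have hspos : 0 < Real.sin (Real.pi * (σ - 1/2)) := by
    apply Real.sin_pos_of_pos_of_lt_pi <;> nlinarith [Real.pi_pos]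
  have hg : 0 < Real.Gamma (2 * (σ - 1/2)) := Real.Gamma_pos_of_pos (by linarith)
  rcases le_or_gt (1/2) x with h | h
  · exact (Er_nonpos h hx1 hxσ).trans_lt (by positivity)
  · have hx0 : 0 < x := (abs_nonneg _).trans_lt hx
    have hcos : Real.cos (Real.pi * x) < Real.sin (Real.pi * (σ - 1/2)) := by
      have e : Real.sin (Real.pi * (σ - 1/2)) = Real.cos (Real.pi * |1 - σ|) := by
        rw [← Real.cos_pi_div_two_sub, ← Real.cos_abs (Real.pi * |1 - σ|), ← Real.cos_abs (Real.pi / 2 - _)]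
        congr 1
        rw [abs_mul, abs_abs, show Real.pi / 2 - Real.pi * (σ - 1/2) = Real.pi * (1 - σ) by ring, abs_mul]
      rw [e]
      apply Real.cos_lt_cos_of_nonneg_of_le_pi_div_two
      · have := abs_nonneg (1 - σ); positivity
      · nlinarith [Real.pi_pos]
      · exact mul_lt_mul_of_pos_left hx Real.pi_pos
    have hlt := abs_lt.1 hx
    have hG : Real.Gamma (2 * (σ - 1/2)) ≤ Real.Gamma (σ - x) * Real.Gamma (σ + x) := by
      have := Gamma_conv (p' := σ - x) (p := 2 * (σ - 1/2)) (q := 1) (q' := σ + x)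
        (by linarith) (by linarith) (by linarith) (by ring)
      simpa using this
    have hc0 : 0 < Real.cos (Real.pi * x) := by
      apply Real.cos_pos_of_mem_Ioo; constructor <;> nlinarith [Real.pi_pos]
    unfold Er
    rw [← mul_inv, ← div_eq_mul_inv]
    calc _ ≤ Real.cos (Real.pi * x) / Real.Gamma (2 * (σ - 1/2)) := by gcongr
      _ < _ := by gcongr

lemma Er_right_le {σ : ℝ} (hσ : 1/2 < σ) (hσ1 : σ ≤ 1) : Er σ (σ + 1/2) ≤ Er σ 1 := by
  rcases hσ1.eq_or_lt with rfl | hσ1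
  · unfold Er
    have h1 : Real.cos (Real.pi * (1 + 1/2)) = 0 := by
      rw [show Real.pi * (1 + 1/2) = Real.pi / 2 + Real.pi by ring, Real.cos_add_pi]; simp
    rw [h1]; simp
  unfold Er
  have h1 : Real.cos (Real.pi * (σ + 1/2)) = - Real.sin (Real.pi * σ) := by
    rw [show Real.pi * (σ + 1/2) = Real.pi * σ + Real.pi / 2 by ring, Real.cos_add_pi_div_two]
  have h2 : Real.cos (Real.pi * 1) = -1 := by simp
  rw [h1, h2, show σ - (σ + 1/2) = -1/2 by ring, show σ + (σ + 1/2) = 2 * σ + 1/2 by ring]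
  have g1 : Real.Gamma (σ + 1) = σ * ((σ - 1) * Real.Gamma (σ - 1)) := by
    rw [Real.Gamma_add_one (by linarith)]
    congr 1
    have := Real.Gamma_add_one (s := σ - 1) (by linarith)
    rwa [sub_add_cancel] at this
  have g2 : Real.Gamma (3/2) = -(1/4) * Real.Gamma (-1/2) := by
    have a := Real.Gamma_add_one (s := 1/2) (by norm_num)
    have b := Real.Gamma_add_one (s := -1/2) (by norm_num)
    norm_num at a b ⊢
    rw [a, b]; ring
  have g3 : Real.Gamma (σ + 1) * Real.Gamma (σ + 1) ≤ Real.Gamma (3/2) * Real.Gamma (2 * σ + 1/2) :=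
    Gamma_conv (by norm_num) (by linarith) (by linarith) (by ring)
  have k1 : 0 < Real.Gamma (σ + 1) := Real.Gamma_pos_of_pos (by linarith)
  have k2 : 0 < Real.Gamma (3/2) := Real.Gamma_pos_of_pos (by norm_num)
  have k3 : 0 < Real.Gamma (2 * σ + 1/2) := Real.Gamma_pos_of_pos (by linarith)
  have i1 : (Real.Gamma (σ - 1))⁻¹ = -(σ * (1 - σ)) / Real.Gamma (σ + 1) := by
    have : Real.Gamma (σ - 1) ≠ 0 := by
      intro h; rw [h] at g1; simp at g1; exact k1.ne' g1
    rw [g1]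
    have : σ ≠ 0 := by linarith
    have : σ - 1 ≠ 0 := by linarith
    field_simp; ring
  have i2 : (Real.Gamma (-1/2))⁻¹ = -(1/4) / Real.Gamma (3/2) := by
    have : Real.Gamma (-1/2) ≠ 0 := by
      intro h; rw [h] at g2; simp at g2; exact k2.ne' g2
    rw [g2]
    field_simp
  rw [i1, i2]
  have hsin : Real.sin (Real.pi * σ) ≤ 4 * (σ * (1 - σ)) := by
    set s := σ - 1/2 with hs
    have e : Real.sin (Real.pi * σ) = 1 - 2 * Real.sin (Real.pi * s / 2) ^ 2 := by
      have : Real.pi * σ = 2 * (Real.pi * s / 2) + Real.pi / 2 := by rw [hs]; ring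
      rw [this, Real.sin_add_pi_div_two, Real.cos_two_mul, Real.cos_sq']; ring
    have hc := strictConcaveOn_sin_Icc.concaveOn.2
      (show (0:ℝ) ∈ Set.Icc 0 Real.pi from ⟨le_rfl, Real.pi_pos.le⟩)
      (show Real.pi / 4 ∈ Set.Icc 0 Real.pi from ⟨by positivity, by linarith [Real.pi_pos]⟩)
      (show 0 ≤ 1 - 2 * s by linarith) (show 0 ≤ 2 * s by linarith) (by ring)
    simp only [smul_eq_mul, Real.sin_zero, mul_zero, zero_add, Real.sin_pi_div_four] at hc
    rw [show 2 * s * (Real.pi / 4) = Real.pi * s / 2 by ring] at hc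
    have hs0 : 0 ≤ 2 * s * (√2 / 2) := by have : 0 ≤ s := by linarith
                                          positivity
    have hsq := pow_le_pow_left₀ hs0 hc 2
    have h2 : √2 ^ 2 = 2 := Real.sq_sqrt (by norm_num)
    rw [e]
    have : (2 * s * (√2 / 2)) ^ 2 = 2 * s ^ 2 := by rw [mul_pow, div_pow, h2]; ring
    rw [this] at hsq
    have : σ = s + 1/2 := by rw [hs]; ring
    rw [this]; nlinarith
  have hpos : 0 ≤ σ * (1 - σ) := by nlinarith
  calc _ = Real.sin (Real.pi * σ) / 4 / (Real.Gamma (3/2) * Real.Gamma (2 * σ + 1/2)) := by field_simp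
    _ ≤ (σ * (1 - σ)) / (Real.Gamma (3/2) * Real.Gamma (2 * σ + 1/2)) := by
      gcongr; linarith
    _ ≤ (σ * (1 - σ)) / (Real.Gamma (σ + 1) * Real.Gamma (σ + 1)) := by gcongr
    _ = _ := by field_simp

lemma fN_key {s : ℝ} {β : ℂ} (hs0 : 0 < s) (hs1 : s < 1)
    (hsin : Complex.sin (Real.pi * (β - 2 * s)) ≠ 0)
    (hG : Complex.Gamma (β + 1) ≠ 0) :
    fNeumann s β * ((Complex.Gamma (2 * s - β))⁻¹) ^ 2 =
      (Complex.Gamma (β + 1)) ^ 2 / Real.pi * (Efun (s + 1/2) (β - s + 1/2) -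
        ((Real.sin (Real.pi * s) / Real.Gamma (2 * s) : ℝ) : ℂ)) := by
  have href := Complex.Gamma_mul_Gamma_one_sub (2 * s - β)
  rw [show (1 : ℂ) - (2 * s - β) = β - 2 * s + 1 by ring,
    show (Real.pi : ℂ) * (2 * s - β) = -(Real.pi * (β - 2 * s)) by ring, Complex.sin_neg] at href
  have hpi : (Real.pi : ℂ) ≠ 0 := by exact_mod_cast Real.pi_ne_zero
  have hprod : Complex.Gamma (2 * s - β) * Complex.Gamma (β - 2 * s + 1) ≠ 0 := by
    rw [href]; exact div_ne_zero hpi (neg_ne_zero.2 hsin)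
  have hA := left_ne_zero_of_mul hprod
  have hB := right_ne_zero_of_mul hprod
  have hss : Complex.sin (Real.pi * s) ≠ 0 := by
    have : Real.sin (Real.pi * s) ≠ 0 := by
      apply ne_of_gt; apply Real.sin_pos_of_pos_of_lt_pi <;> nlinarith [Real.pi_pos]
    have h2 : Complex.sin (Real.pi * s) = ((Real.sin (Real.pi * s) : ℝ) : ℂ) := by push_cast; rfl
    rw [h2]; exact_mod_cast this
  have hg2 : Complex.Gamma (2 * s) ≠ 0 := by
    apply Complex.Gamma_ne_zero_of_re_pos; simpa using hs0
  have hden : Complex.Gamma (β - 2 * s + 1) * Complex.sin (Real.pi * (β - 2 * s)) =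
      - Real.pi / Complex.Gamma (2 * s - β) := by
    rw [eq_div_iff hA]
    rw [eq_div_iff (neg_ne_zero.2 hsin)] at href
    linear_combination -href
  have hC : ((Real.sin (Real.pi * s) / Real.Gamma (2 * s) : ℝ) : ℂ) =
      Complex.sin (Real.pi * s) / Complex.Gamma (2 * s) := by
    push_cast [← Complex.Gamma_ofReal]; rfl
  have hcos : Complex.cos (Real.pi * (β - s + 1/2)) = - Complex.sin (Real.pi * (β - s)) := by
    rw [show (Real.pi : ℂ) * (β - s + 1/2) = Real.pi * (β - s) + Real.pi / 2 by ring,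
      Complex.cos_add_pi_div_two]
  rw [hC]
  unfold fNeumann Efun
  rw [hden, hcos]
  rw [show (((s + 1/2 : ℝ)) : ℂ) - (β - s + 1/2) = 2 * s - β by push_cast; ring,
    show (((s + 1/2 : ℝ)) : ℂ) + (β - s + 1/2) = β + 1 by push_cast; ring]
  generalize Complex.Gamma (2 * s - β) = a at *
  generalize Complex.Gamma (2 * s) = b at *
  generalize Complex.Gamma (β + 1) = c at *
  generalize Complex.sin (Real.pi * s) = d at *
  generalize Complex.sin (Real.pi * (β - s)) = e at *
  field_simp
  ring

lemma Gamma_analyticAt {z : ℂ} (h : Complex.Gamma z ≠ 0) : AnalyticAt ℂ Complex.Gamma z := by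
  have h1 : AnalyticAt ℂ (fun z => (Complex.Gamma z)⁻¹) z :=
    Complex.differentiable_one_div_Gamma.analyticAt z
  have h2 := h1.inv (inv_ne_zero h)
  refine h2.congr (Eventually.of_forall fun w => ?_)
  simp

lemma C_pos {s : ℝ} (hs0 : 0 < s) (hs1 : s < 1) : 0 < Real.sin (Real.pi * s) / Real.Gamma (2 * s) := by
  refine div_pos ?_ (Real.Gamma_pos_of_pos (by linarith))
  apply Real.sin_pos_of_pos_of_lt_pi <;> nlinarith [Real.pi_pos]

lemma isZero_of_Efun {s : ℝ} {β : ℂ} (hs0 : 0 < s) (hs1 : s < 1) (hβ : -1 < β.re) (hβ2 : 2 * s - 1 < β.re)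
    (h : Efun (s + 1/2) (β - s + 1/2) = ((Real.sin (Real.pi * s) / Real.Gamma (2 * s) : ℝ) : ℂ)) :
    IsZeroOf (fNeumann s) β := by
  have hG : Complex.Gamma (β + 1) ≠ 0 := Complex.Gamma_ne_zero_of_re_pos (by simp; linarith)
  have hB : Complex.Gamma (β - 2 * s + 1) ≠ 0 := Complex.Gamma_ne_zero_of_re_pos (by simp; linarith)
  have hA : Complex.Gamma (2 * s - β) ≠ 0 := by
    intro h0
    unfold Efun at h
    rw [show (((s + 1/2 : ℝ)) : ℂ) - (β - s + 1/2) = 2 * s - β by push_cast; ring, h0] at h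
    simp only [inv_zero, zero_mul, mul_zero] at h
    have := C_pos hs0 hs1
    exact this.ne (by exact_mod_cast h)
  have hsin : Complex.sin (Real.pi * (β - 2 * s)) ≠ 0 := by
    intro h0
    have href := Complex.Gamma_mul_Gamma_one_sub (2 * s - β)
    rw [show (1 : ℂ) - (2 * s - β) = β - 2 * s + 1 by ring,
      show (Real.pi : ℂ) * (2 * s - β) = -(Real.pi * (β - 2 * s)) by ring, Complex.sin_neg, h0] at href
    simp only [neg_zero, div_zero] at href
    exact mul_ne_zero hA hB href
  constructor
  · have a1 : AnalyticAt ℂ (fun β : ℂ => Complex.Gamma (β + 1)) β :=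
      (Gamma_analyticAt hG).comp_of_eq (g := Complex.Gamma) (f := fun β : ℂ => β + 1) (by fun_prop) rfl
    have a2 : AnalyticAt ℂ (fun β : ℂ => Complex.Gamma (β - 2 * s + 1)) β :=
      (Gamma_analyticAt hB).comp_of_eq (g := Complex.Gamma) (f := fun β : ℂ => β - 2 * s + 1) (by fun_prop) rfl
    have a3 : AnalyticAt ℂ (fun β : ℂ => Complex.Gamma (2 * s - β)) β :=
      (Gamma_analyticAt hA).comp_of_eq (g := Complex.Gamma) (f := fun β : ℂ => 2 * s - β) (by fun_prop) rfl
    have a4 : AnalyticAt ℂ (fun β : ℂ => Complex.sin (Real.pi * (β - 2 * s))) β :=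
      Differentiable.analyticAt (by fun_prop) β
    have a5 : AnalyticAt ℂ (fun β : ℂ => Complex.sin (Real.pi * (β - s)) / Complex.sin (Real.pi * s)) β :=
      Differentiable.analyticAt (by fun_prop) β
    have a6 : AnalyticAt ℂ (fun β : ℂ => Complex.Gamma (2 * s - β) * Complex.Gamma (β + 1) / Complex.Gamma (2 * s)) β := by
      simp only [div_eq_mul_inv]
      exact (a3.mul a1).mul analyticAt_const
    exact ((a1.mul analyticAt_const).div (a2.mul a4) (mul_ne_zero hB hsin)).mul (a5.add a6)
  · have hk := fN_key hs0 hs1 hsin hG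
    rw [h, sub_self, mul_zero] at hk
    exact (mul_eq_zero.1 hk).resolve_right (pow_ne_zero _ (inv_ne_zero hA))

lemma Efun_of_isZero {s : ℝ} {β : ℂ} (hs0 : 0 < s) (hs1 : s < 1) (hβ : -1 < β.re)
    (h : IsZeroOf (fNeumann s) β) :
    Efun (s + 1/2) (β - s + 1/2) = ((Real.sin (Real.pi * s) / Real.Gamma (2 * s) : ℝ) : ℂ) := by
  have hG : Complex.Gamma (β + 1) ≠ 0 := Complex.Gamma_ne_zero_of_re_pos (by simp; linarith)
  have hpi : (Real.pi : ℂ) ≠ 0 := by exact_mod_cast Real.pi_ne_zero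
  have key : fNeumann s β * ((Complex.Gamma (2 * s - β))⁻¹) ^ 2 =
      (Complex.Gamma (β + 1)) ^ 2 / Real.pi * (Efun (s + 1/2) (β - s + 1/2) -
        ((Real.sin (Real.pi * s) / Real.Gamma (2 * s) : ℝ) : ℂ)) := by
    by_cases hsin : Complex.sin (Real.pi * (β - 2 * s)) = 0
    · have a1 : AnalyticAt ℂ (fun β : ℂ => Complex.Gamma (β + 1)) β :=
        (Gamma_analyticAt hG).comp_of_eq (g := Complex.Gamma) (f := fun β : ℂ => β + 1) (by fun_prop) rfl
      have hd : HasDerivAt (fun z : ℂ => Complex.sin (Real.pi * (z - 2 * s)))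
          (Complex.cos (Real.pi * (β - 2 * s)) * (Real.pi * 1)) β := by
        have := ((hasDerivAt_id β).sub_const (2 * s : ℂ)).const_mul (Real.pi : ℂ)
        exact this.csin
      have hcos : Complex.cos (Real.pi * (β - 2 * s)) ≠ 0 := by
        intro h0
        have := Complex.sin_sq_add_cos_sq (Real.pi * (β - 2 * s))
        rw [hsin, h0] at this; simp at this
      have hne := hd.eventually_ne (c := 0) (mul_ne_zero hcos (by simpa using hpi))
      have c1 : ContinuousAt (fun z => fNeumann s z * ((Complex.Gamma (2 * s - z))⁻¹) ^ 2) β := by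
        refine h.1.continuousAt.mul (ContinuousAt.pow ?_ 2)
        exact (Complex.differentiable_one_div_Gamma.continuous.comp
          (g := fun z => (Complex.Gamma z)⁻¹) (f := fun z : ℂ => 2 * (s:ℂ) - z) (by fun_prop)).continuousAt
      have c2 : ContinuousAt (fun z => (Complex.Gamma (z + 1)) ^ 2 / Real.pi * (Efun (s + 1/2) (z - s + 1/2) -
        ((Real.sin (Real.pi * s) / Real.Gamma (2 * s) : ℝ) : ℂ))) β := by
        refine ContinuousAt.mul ((a1.continuousAt.pow 2).div_const _) (ContinuousAt.sub ?_ continuousAt_const)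
        exact ((Efun_continuous (s + 1/2)).comp (f := fun z : ℂ => z - s + 1/2) (by fun_prop)).continuousAt
      have hev : ∀ᶠ z in 𝓝[≠] β, fNeumann s z * ((Complex.Gamma (2 * s - z))⁻¹) ^ 2 =
          (Complex.Gamma (z + 1)) ^ 2 / Real.pi * (Efun (s + 1/2) (z - s + 1/2) -
          ((Real.sin (Real.pi * s) / Real.Gamma (2 * s) : ℝ) : ℂ)) := by
        have hGev := (a1.continuousAt.eventually_ne hG).filter_mono (nhdsWithin_le_nhds (s := {β}ᶜ))
        filter_upwards [hne, hGev] with z hz1 hz2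
        exact fN_key hs0 hs1 hz1 hz2
      exact tendsto_nhds_unique_of_eventuallyEq (c1.tendsto.mono_left nhdsWithin_le_nhds)
        (c2.tendsto.mono_left nhdsWithin_le_nhds) hev
    · exact fN_key hs0 hs1 hsin hG
  rw [h.2, zero_mul] at key
  have := (mul_eq_zero.1 key.symm).resolve_left (div_ne_zero (pow_ne_zero _ hG) hpi)
  exact sub_eq_zero.1 this

/-- No solutions in a strip slightly wider than `|1-σ| < Re w ≤ l`. -/
lemma no_solution {σ l : ℝ} (hσ : 1/2 < σ) (hσ2 : σ < 3/2) (hl1 : l ≤ 1) (hlσ : l ≤ σ)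
    (hl : |1 - σ| < l) {C : ℝ}
    (hC : C = Real.sin (Real.pi * (σ - 1/2)) / Real.Gamma (2 * (σ - 1/2))) (hC0 : 0 < C) :
    ∃ α > 0, ∀ x y : ℝ, |1 - σ| < x → x < l + α → Efun σ (x + y * Complex.I) ≠ C := by
  have hconj : ∀ x y : ℝ, Efun σ (x + y * Complex.I) = C → Efun σ (x + |y| * Complex.I) = C := by
    intro x y h
    rcases le_total 0 y with hy | hy
    · rwa [abs_of_nonneg hy]
    · rw [abs_of_nonpos hy]
      have := Efun_conj σ (x + y * Complex.I)
      rw [h] at this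
      simpa using this
  have base : ∀ x y : ℝ, |1 - σ| < x → x ≤ l → 0 ≤ y → Efun σ (x + y * Complex.I) ≠ C := by
    intro x y hx hxl hy
    have hx0 : 0 < x := (abs_nonneg _).trans_lt hx
    rcases hy.eq_or_lt with rfl | hy
    · have := Er_lt hσ hσ2 hx (by linarith) (by linarith)
      rw [← hC] at this
      simp only [Complex.ofReal_zero, zero_mul, add_zero]
      rw [Efun_ofReal]
      exact_mod_cast this.ne
    · exact Efun_ne_upper hσ (by linarith) hx0 hy hC0
  obtain ⟨Y, hY, hYC⟩ := Efun_growth σ C l (l + 1)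
  have hev : ∀ᶠ x : ℝ in 𝓝 l, ∀ y ∈ Set.Icc (0:ℝ) Y, Efun σ (x + y * Complex.I) ≠ C := by
    apply isCompact_Icc.eventually_forall_of_forall_eventually
    intro y hy
    have hE := Efun_continuous σ
    have hcc : Continuous (fun z : ℝ × ℝ => Efun σ (z.1 + z.2 * Complex.I)) :=
      hE.comp (by fun_prop)
    exact hcc.continuousAt.eventually_ne (base l y hl le_rfl hy.1)
  obtain ⟨ε, hε, hball⟩ := Metric.eventually_nhds_iff.1 hev
  refine ⟨min ε 1, by positivity, fun x y hx hxl h => ?_⟩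
  have h' := hconj x y h
  rcases le_or_gt x l with hle | hgt
  · exact base x |y| hx hle (abs_nonneg y) h'
  · have m1 := min_le_left ε 1
    have m2 := min_le_right ε 1
    rcases le_or_gt |y| Y with hyY | hyY
    · refine hball ?_ |y| ⟨abs_nonneg y, hyY⟩ h'
      rw [Real.dist_eq, abs_of_pos (by linarith)]; linarith
    · have := hYC x ⟨hgt.le, by linarith⟩ |y| hyY.le
      rw [h', Complex.norm_real, Real.norm_of_nonneg hC0.le] at this
      exact lt_irrefl _ this

lemma exists_i {σ C : ℝ} (hσ : 1/2 < σ) (hσ1 : σ ≤ 1) (hC0 : 0 < C) :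
    ∃ x y : ℝ, σ < x ∧ x < σ + 1/2 ∧ Efun σ (x + y * Complex.I) = C := by
  by_cases hreal : ∀ x : ℝ, σ ≤ x → x ≤ σ + 1/2 → (Efun σ x).re < C
  · obtain ⟨x, y, h1, h2, -, h4⟩ := exists_complex (σ := σ) (l := σ) (r := σ + 1/2) (by linarith)
      (fun y hy => ⟨Phi_left_i hσ hy, Phi_lt_two_pi hσ hσ1 (by linarith) hy⟩)
      (fun y hy => Phi_right_i hσ hσ1 hy) hreal
    exact ⟨x, y, h1, h2, h4⟩
  · have h0 : Er σ σ < C := (Er_nonpos hσ.le hσ1 le_rfl).trans_lt hC0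
    obtain ⟨b, hb1, hb2, hbC⟩ : ∃ b, σ ≤ b ∧ b < σ + 1/2 ∧ C ≤ Er σ b := by
      push Not at hreal
      obtain ⟨x, hx1, hx2, hx⟩ := hreal
      rw [Efun_ofReal, Complex.ofReal_re] at hx
      rcases hx2.eq_or_lt with rfl | hx2
      · exact ⟨1, hσ1, by linarith, hx.trans (Er_right_le hσ hσ1)⟩
      · exact ⟨x, hx1, hx2, hx⟩
    obtain ⟨x, hx, hxC⟩ := intermediate_value_Icc hb1 (Er_continuous σ).continuousOn
      (show C ∈ Set.Icc _ _ from ⟨h0.le, hbC⟩)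
    refine ⟨x, 0, lt_of_le_of_ne hx.1 ?_, hx.2.trans_lt hb2, ?_⟩
    · rintro rfl; exact h0.ne hxC
    · simp only [Complex.ofReal_zero, zero_mul, add_zero]
      rw [Efun_ofReal, hxC]

lemma exists_ii {σ C : ℝ} (hσ : 1 ≤ σ) (hσ1 : σ < 3/2) (hC0 : 0 < C) :
    ∃ x y : ℝ, 1 < x ∧ x < 3/2 ∧ Efun σ (x + y * Complex.I) = C := by
  by_cases hreal : ∀ x : ℝ, 1 ≤ x → x ≤ 3/2 → (Efun σ x).re < C
  · obtain ⟨x, y, h1, h2, -, h4⟩ := exists_complex (σ := σ) (l := 1) (r := 3/2) (by norm_num)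
      (fun y hy => ⟨Phi_left_ii hy, Phi_lt_two_pi (by linarith) le_rfl (by linarith) hy⟩)
      (fun y hy => Phi_right_ii hσ hσ1 hy) hreal
    exact ⟨x, y, h1, h2, h4⟩
  · have h0 : Er σ 1 < C := (Er_nonpos (by norm_num) le_rfl hσ).trans_lt hC0
    have h3 : Er σ (3/2) = 0 := by
      unfold Er
      rw [show Real.pi * (3/2) = Real.pi / 2 + Real.pi by ring, Real.cos_add_pi]; simp
    push Not at hreal
    obtain ⟨b, hb1, hb2, hbC⟩ := hreal
    rw [Efun_ofReal, Complex.ofReal_re] at hbC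
    obtain ⟨x, hx, hxC⟩ := intermediate_value_Icc hb1 (Er_continuous σ).continuousOn
      (show C ∈ Set.Icc _ _ from ⟨h0.le, hbC⟩)
    refine ⟨x, 0, lt_of_le_of_ne hx.1 ?_, lt_of_le_of_ne (hx.2.trans hb2) ?_, ?_⟩
    · rintro rfl; exact h0.ne hxC
    · rintro rfl; rw [h3] at hxC; exact hC0.ne hxC
    · simp only [Complex.ofReal_zero, zero_mul, add_zero]
      rw [Efun_ofReal, hxC]

theorem zeros_of_fNeumann (s : ℝ) (hs : s ∈ Set.Ioo (0:ℝ) 1) :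
    (s ≤ 1/2 →
      (∃ α > 0, ∀ β : ℂ, 0 < β.re → β.re < 2 * s + α → ¬ IsZeroOf (fNeumann s) β) ∧
      (∃ β : ℂ, 2 * s < β.re ∧ β.re < 2 * s + 1/2 ∧ IsZeroOf (fNeumann s) β)) ∧
    (1/2 ≤ s →
      (∃ α > 0, ∀ β : ℂ, 2 * s - 1 < β.re → β.re < s + 1/2 + α → ¬ IsZeroOf (fNeumann s) β) ∧
      (∃ β : ℂ, s + 1/2 < β.re ∧ β.re < s + 1 ∧ IsZeroOf (fNeumann s) β)) := by
  obtain ⟨hs0, hs1⟩ := hs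
  have hC0 := C_pos hs0 hs1
  have hCeq : Real.sin (Real.pi * s) / Real.Gamma (2 * s) =
      Real.sin (Real.pi * ((s + 1/2) - 1/2)) / Real.Gamma (2 * ((s + 1/2) - 1/2)) := by
    rw [add_sub_cancel_right]
  have hw : ∀ β : ℂ, β - s + 1/2 = ((β.re - s + 1/2 : ℝ) : ℂ) + (β.im : ℝ) * Complex.I := by
    intro β
    apply Complex.ext <;> simp
  have hb : ∀ x y : ℝ, ((x + y * Complex.I + s - 1/2 : ℂ)) - s + 1/2 = x + y * Complex.I := by
    intro x y; ring
  have hbre : ∀ x y : ℝ, ((x + y * Complex.I + s - 1/2 : ℂ)).re = x + s - 1/2 := by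
    intro x y; simp
  refine ⟨fun hsh => ⟨?_, ?_⟩, fun hsh => ⟨?_, ?_⟩⟩
  · have habs : |1 - (s + 1/2)| = 1/2 - s := by rw [abs_of_nonneg (by linarith)]; ring
    obtain ⟨α, hα, H⟩ := no_solution (σ := s + 1/2) (l := s + 1/2) (by linarith) (by linarith)
      (by linarith) le_rfl (by rw [habs]; linarith) hCeq hC0
    refine ⟨α, hα, fun β h1 h2 hz => ?_⟩
    have := Efun_of_isZero hs0 hs1 (by linarith) hz
    rw [hw] at this
    exact H _ _ (by rw [habs]; linarith) (by linarith) this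
  · obtain ⟨x, y, h1, h2, h3⟩ := exists_i (σ := s + 1/2) (by linarith) (by linarith) hC0
    refine ⟨x + y * Complex.I + s - 1/2, ?_, ?_, ?_⟩
    · rw [hbre]; linarith
    · rw [hbre]; linarith
    · apply isZero_of_Efun hs0 hs1
      · rw [hbre]; linarith
      · rw [hbre]; linarith
      · rw [hb]; exact h3
  · have habs : |1 - (s + 1/2)| = s - 1/2 := by rw [abs_of_nonpos (by linarith)]; ring
    obtain ⟨α, hα, H⟩ := no_solution (σ := s + 1/2) (l := 1) (by linarith) (by linarith)
      le_rfl (by linarith) (by rw [habs]; linarith) hCeq hC0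
    refine ⟨α, hα, fun β h1 h2 hz => ?_⟩
    have := Efun_of_isZero hs0 hs1 (by linarith) hz
    rw [hw] at this
    exact H _ _ (by rw [habs]; linarith) (by linarith) this
  · obtain ⟨x, y, h1, h2, h3⟩ := exists_ii (σ := s + 1/2) (by linarith) (by linarith) hC0
    refine ⟨x + y * Complex.I + s - 1/2, ?_, ?_, ?_⟩
    · rw [hbre]; linarith
    · rw [hbre]; linarith
    · apply isZero_of_Efun hs0 hs1
      · rw [hbre]; linarith
      · rw [hbre]; linarith
      · rw [hb]; exact h3
end

section
/- Let s ∈ (1/2, 1) and let g(z) = Γ(2s−z) Γ(z+1)/Γ(2s) − sin(π(s−z))/sin(πs). Then there exists M > 0 (possibly depending on s) such that g has at least one zero in the region {z ∈ ℂ : Re z ∈ (s+1/2, s+1) and Im z ∈ [0,M]}. -/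
/-!
STATEMENT 16: For s ∈ (1/2, 1), with g(z) = Γ(2s−z)Γ(z+1)/Γ(2s) − sin(π(s−z))/sin(πs),
there exists M > 0 such that g has at least one zero (a point where g is defined,
i.e. analytic, and vanishes) in {z ∈ ℂ : Re z ∈ (s+1/2, s+1), Im z ∈ [0, M]}.
-/

noncomputable def gFun (s : ℝ) (z : ℂ) : ℂ :=
  Complex.Gamma (2 * s - z) * Complex.Gamma (z + 1) / Complex.Gamma (2 * s) -
    Complex.sin (Real.pi * (s - z)) / Complex.sin (Real.pi * s)

open Complex in
lemma const_of_exp {a b : ℝ} (hab : a ≤ b) (φ : ℝ → ℂ) (hφ : ContinuousOn φ (Set.Icc a b))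
    (c : ℂ) (h : ∀ t ∈ Set.Icc a b, exp (φ t) = c) : φ a = φ b := by
  have : PreconnectedSpace (Set.Icc a b) := Subtype.preconnectedSpace isPreconnected_Icc
  exact Complex.isCoveringMap_exp.const_of_comp (g := fun t : Set.Icc a b => φ t)
    (continuousOn_iff_continuous_domRestrict.1 hφ)
    (fun s t => Subtype.ext (by simp only [h s s.2, h t t.2])) ⟨a, Set.left_mem_Icc.2 hab⟩
    ⟨b, Set.right_mem_Icc.2 hab⟩

open Complex in
lemma exists_lift (F : ℝ × ℝ → ℂ) (hF : Continuous F) (h0 : ∀ q, F q ≠ 0) :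
    ∃ L : ℝ × ℝ → ℂ, Continuous L ∧ ∀ q, exp (L q) = F q := by
  obtain ⟨L, ⟨-, hL⟩, -⟩ := Complex.isCoveringMapOn_exp.existsUnique_continuousMap_lifts
    (⟨F, hF⟩ : C(ℝ × ℝ, ℂ)) (a₀ := 0) (e₀ := log (F 0)) (exp_log (h0 0)) (fun q => h0 q)
  exact ⟨L, L.continuous, fun q => congrFun hL q⟩

open Complex in
lemma arg_eq_of (w v : ℂ) (hw : w ≠ 0) (hv : v ≠ 0) (α : ℝ) (u : ℂ) (hu : exp (α * I) = u)
    (h : ∃ r : ℝ, 0 < r ∧ w = r * (v * u)) (h1 : w.arg - v.arg - α < 2 * Real.pi)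
    (h2 : -(2 * Real.pi) < w.arg - v.arg - α) : w.arg = v.arg + α := by
  obtain ⟨r, hr, e⟩ := h
  have e1 : w.arg = (((v.arg + α : ℝ) : Real.Angle)).toReal := by
    rw [← Complex.arg_coe_angle_toReal_eq_arg w, e, Complex.arg_real_mul _ hr,
      Complex.arg_mul_coe_angle hv (by rw [← hu]; exact exp_ne_zero _), ← hu,
      Complex.arg_exp_mul_I]
    congr 1
    push_cast
    rw [Real.Angle.coe_toIocMod]
    rw [Real.Angle.coe_add]
  have e2 : ((w.arg : ℝ) : Real.Angle) = ((v.arg + α : ℝ) : Real.Angle) := by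
    rw [e1, Real.Angle.coe_toReal]
  rw [Real.Angle.angle_eq_iff_two_pi_dvd_sub] at e2
  obtain ⟨k, hk⟩ := e2
  have hp := Real.pi_pos
  have : k = 0 := by
    have a1 : (k : ℝ) < 1 := by nlinarith
    have a2 : (-1 : ℝ) < k := by nlinarith
    have a1' : k < 1 := by exact_mod_cast a1
    have a2' : -1 < k := by exact_mod_cast a2
    omega
  rw [this] at hk
  simp at hk
  linarith

open Complex Set in
lemma winding (a b p M : ℝ) (hap : a < p) (hpb : p < b) (hM : 0 < M) (g h : ℂ → ℂ)
    (hc : ∀ x ∈ Icc a b, ∀ y ∈ Icc 0 M, ContinuousAt h (x + y * I))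
    (hg : ∀ z : ℂ, z ≠ p → h z = (p - z) * g z)
    (h0 : ∀ x ∈ Icc a b, ∀ y ∈ Icc 0 M, h (x + y * I) ≠ 0)
    (hbot : ∀ x ∈ Icc a b, (h x).im = 0)
    (hga : (g a).im = 0 ∧ 0 < (g a).re) (hgb : (g b).im = 0)
    (hleft : ∀ y ∈ Ioc 0 M, 0 < (g (a + y * I)).im)
    (hright : ∀ y ∈ Icc 0 M, (g (b + y * I)).re < 0)
    (htop : ∀ x ∈ Icc a b, (g (x + M * I)).im < (g (x + M * I)).re) : False := by
  have hab : a ≤ b := by linarith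
  let cx : ℝ → ℝ := fun x => max a (min b x)
  let cy : ℝ → ℝ := fun y => max 0 (min M y)
  have cxm : ∀ x, cx x ∈ Icc a b := fun x => ⟨le_max_left _ _, max_le hab (min_le_left _ _)⟩
  have cym : ∀ x, cy x ∈ Icc 0 M := fun x => ⟨le_max_left _ _, max_le hM.le (min_le_left _ _)⟩
  have cxe : ∀ x ∈ Icc a b, cx x = x := fun x hx => by simp [cx, hx.1, hx.2]
  have cye : ∀ x ∈ Icc 0 M, cy x = x := fun x hx => by simp [cy, hx.1, hx.2]
  obtain ⟨L, Lc, hL⟩ := exists_lift (fun q => h (cx q.1 + cy q.2 * I))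
    (by
      rw [continuous_iff_continuousAt]
      intro q
      have k : ContinuousAt (fun q : ℝ × ℝ => (cx q.1 + cy q.2 * I : ℂ)) q := by
        apply Continuous.continuousAt
        fun_prop
      exact ContinuousAt.comp (f := fun q : ℝ × ℝ => (cx q.1 + cy q.2 * I : ℂ))
        (hc _ (cxm _) _ (cym _)) k)
    (fun q => h0 _ (cxm _) _ (cym _))
  replace hL : ∀ x ∈ Icc a b, ∀ y ∈ Icc 0 M, exp (L (x, y)) = h (x + y * I) := by
    intro x hx y hy
    rw [hL]; simp only [cxe x hx, cye y hy]
  have ma : a ∈ Icc a b := ⟨le_rfl, hab⟩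
  have mb : b ∈ Icc a b := ⟨hab, le_rfl⟩
  have m0 : (0:ℝ) ∈ Icc 0 M := ⟨le_rfl, hM.le⟩
  have mM : M ∈ Icc 0 M := ⟨hM.le, le_rfl⟩
  have gc : ∀ x ∈ Icc a b, ∀ y ∈ Icc 0 M, (x + y * I : ℂ) ≠ p →
      ContinuousAt g (x + y * I) := by
    intro x hx y hy hne
    have : ContinuousAt (fun z => h z / (p - z)) (x + y * I) :=
      (hc x hx y hy).div (by fun_prop) (sub_ne_zero.2 hne.symm)
    refine this.congr ?_
    filter_upwards [isOpen_ne.mem_nhds hne] with z hz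
    rw [hg z hz, mul_div_cancel_left₀ _ (sub_ne_zero.2 (Ne.symm hz))]
  have nea : ∀ y : ℝ, (a + y * I : ℂ) ≠ p := fun y e => by
    have := congrArg re e; simp at this; linarith
  have neb : ∀ y : ℝ, (b + y * I : ℂ) ≠ p := fun y e => by
    have := congrArg re e; simp at this; linarith
  have neM : ∀ x : ℝ, (x + M * I : ℂ) ≠ p := fun y e => by
    have := congrArg im e; simp at this; linarith
  have hpa : h a = ((p - a) * (g a).re : ℝ) := by
    have := hg a (by simpa using nea 0)
    rw [this]
    apply Complex.ext <;> simp [hga.1]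
  have hpb' : h b = ((p - b) * (g b).re : ℝ) := by
    have := hg b (by simpa using neb 0)
    rw [this]
    apply Complex.ext <;> simp [hgb]
  have hgbneg : (g b).re < 0 := by simpa using hright 0 m0
  have bpos : ∀ x ∈ Icc a b, 0 < (h x).re := by
    intro x hx
    by_contra hneg
    push Not at hneg
    have cont : ContinuousOn (fun x : ℝ => (h x).re) (Icc a x) := by
      intro t ht
      apply ContinuousAt.continuousWithinAt
      have := hc t ⟨ht.1, ht.2.trans hx.2⟩ 0 m0
      simp only [ofReal_zero, zero_mul, add_zero] at this
      exact continuous_re.continuousAt.comp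
        (ContinuousAt.comp (f := fun x : ℝ => (x : ℂ)) this continuous_ofReal.continuousAt)
    obtain ⟨t, ht, e⟩ := intermediate_value_Icc' hx.1 cont
      (show (0:ℝ) ∈ _ from ⟨hneg, by
        simp only [hpa, ofReal_re]; exact (mul_pos (by linarith) hga.2).le⟩)
    have ht' : t ∈ Icc a b := ⟨ht.1, ht.2.trans hx.2⟩
    apply h0 t ht' 0 m0
    simp only [ofReal_zero, zero_mul, add_zero]
    exact Complex.ext e (hbot t ht')
  have B := const_of_exp hab (fun x => L (x, 0) - log (h x)) (by
      apply ContinuousOn.sub (by fun_prop)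
      intro t ht
      apply ContinuousAt.continuousWithinAt
      have := hc t ht 0 m0
      simp only [ofReal_zero, zero_mul, add_zero] at this
      exact (ContinuousAt.comp (f := fun x : ℝ => (x : ℂ)) this
        continuous_ofReal.continuousAt).clog (Or.inl (bpos t ht))) 1 (by
      intro t ht
      have := hL t ht 0 m0
      have h00 := h0 t ht 0 m0
      simp only [ofReal_zero, zero_mul, add_zero] at this h00
      rw [exp_sub, this, exp_log h00, div_self h00])
  have Lf := const_of_exp hM.le (fun y => L (a, y) - log (g (a + y * I)) - log (p - (a + y * I)))
    (by
      intro t ht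
      apply ContinuousAt.continuousWithinAt
      refine (ContinuousAt.sub (by fun_prop) (ContinuousAt.clog ?_ ?_)).sub
        (ContinuousAt.clog (by fun_prop) (Or.inl (by simpa using hap)))
      · exact ContinuousAt.comp (f := fun y : ℝ => (a + y * I : ℂ)) (gc a ma t ht (nea t))
          (by fun_prop)
      · rcases ht.1.eq_or_lt with e | e
        · left; rw [← e]; simpa using hga.2
        · right; exact (hleft t ⟨e, ht.2⟩).ne') 1 (by
      intro t ht
      have e := hg _ (nea t)
      have ne := h0 a ma t ht
      rw [e] at ne
      rw [exp_sub, exp_sub, hL a ma t ht, e, exp_log (right_ne_zero_of_mul ne),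
        exp_log (left_ne_zero_of_mul ne), mul_div_cancel_right₀ _ (right_ne_zero_of_mul ne),
        div_self (left_ne_zero_of_mul ne)])
  have Rt := const_of_exp hM.le
    (fun y => L (b, y) - log (-g (b + y * I)) - log (-(p - (b + y * I))))
    (by
      intro t ht
      apply ContinuousAt.continuousWithinAt
      refine (ContinuousAt.sub (by fun_prop) (ContinuousAt.clog ?_ ?_)).sub
        (ContinuousAt.clog (by fun_prop) (Or.inl (by simpa using hpb)))
      · exact (ContinuousAt.comp (f := fun y : ℝ => (b + y * I : ℂ)) (gc b mb t ht (neb t))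
          (by fun_prop)).neg
      · left; simpa using hright t ht) 1 (by
      intro t ht
      have e := hg _ (neb t)
      have ne := h0 b mb t ht
      rw [e] at ne
      have n1 := left_ne_zero_of_mul ne
      have n2 := right_ne_zero_of_mul ne
      rw [exp_sub, exp_sub, hL b mb t ht, e, exp_log (neg_ne_zero.2 n2),
        exp_log (neg_ne_zero.2 n1), div_div, neg_mul_neg, mul_comm, div_self (mul_ne_zero n2 n1)])
  have T := const_of_exp hab
    (fun x => L (x, M) - log ((1 + I) * g (x + M * I)) - log (I * (p - (x + M * I))))
    (by
      intro t ht
      apply ContinuousAt.continuousWithinAt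
      refine (ContinuousAt.sub (by fun_prop) (ContinuousAt.clog ?_ ?_)).sub
        (ContinuousAt.clog (by fun_prop) (Or.inl (by simpa using hM)))
      · exact continuousAt_const.mul (ContinuousAt.comp (f := fun x : ℝ => (x + M * I : ℂ))
          (gc t ht M mM (neM t)) (by fun_prop))
      · left; simpa using htop t ht) (1 / ((1 + I) * I)) (by
      intro t ht
      have e := hg _ (neM t)
      have ne := h0 t ht M mM
      rw [e] at ne
      have n1 := left_ne_zero_of_mul ne
      have n2 := right_ne_zero_of_mul ne
      have n3 : (1 + I) ≠ 0 := fun e => by simpa using congrArg re e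
      rw [exp_sub, exp_sub, hL t ht M mM, e, exp_log (mul_ne_zero n3 n2),
        exp_log (mul_ne_zero I_ne_zero n1)]
      field_simp)
  have B' := congrArg im B
  have L' := congrArg im Lf
  have R' := congrArg im Rt
  have T' := congrArg im T
  have gTLi := hleft M ⟨hM, le_rfl⟩
  have gTLr := htop a ma
  have gTRr := hright M mM
  have gTRi := htop b mb
  simp only [sub_im, log_im, ofReal_zero, zero_mul, add_zero] at B' L' R' T'
  have z1 : (h a).arg = 0 := arg_eq_zero_iff.2 ⟨(bpos a ma).le, hbot a ma⟩
  have z2 : (h b).arg = 0 := arg_eq_zero_iff.2 ⟨(bpos b mb).le, hbot b mb⟩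
  have z3 : (g a).arg = 0 := arg_eq_zero_iff.2 ⟨hga.2.le, hga.1⟩
  have z4 : (-g b).arg = 0 := arg_eq_zero_iff.2 ⟨by simpa using hgbneg.le, by simpa using hgb⟩
  have z5 : ((p : ℂ) - a).arg = 0 := arg_eq_zero_iff.2 ⟨by simpa using hap.le, by simp⟩
  have z6 : (-((p : ℂ) - b)).arg = 0 := arg_eq_zero_iff.2 ⟨by simpa using hpb.le, by simp⟩
  rw [z1, z2] at B'
  rw [z3, z5] at L'
  rw [z4, z6] at R'
  generalize g (a + M * I) = u at *
  generalize g (b + M * I) = v at *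
  have hp := Real.pi_pos
  have hu0 : u ≠ 0 := fun e => by simp [e] at gTLi
  have hv0 : v ≠ 0 := fun e => by simp [e] at gTRr
  have n3 : (1 + I) ≠ 0 := fun e => by simpa using congrArg re e
  have s2 : Real.sqrt 2 * Real.sqrt 2 = 2 := Real.mul_self_sqrt (by norm_num)
  have s2' : ((Real.sqrt 2 : ℝ) : ℂ) * Real.sqrt 2 = 2 := by exact_mod_cast s2
  have e4 : exp ((Real.pi / 4 : ℝ) * I) = (1 + I) / Real.sqrt 2 := by
    rw [exp_mul_I, ← ofReal_cos, ← ofReal_sin, Real.cos_pi_div_four, Real.sin_pi_div_four]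
    have : ((Real.sqrt 2 : ℝ) : ℂ) ≠ 0 := by simp
    push_cast
    field_simp
    linear_combination s2'
  have ar1 := abs_lt.1 (abs_arg_lt_pi_div_two_iff.2 (Or.inl
    (by simpa using gTLr : 0 < ((1 + I) * u).re)))
  have ar2 := abs_lt.1 (abs_arg_lt_pi_div_two_iff.2 (Or.inl
    (by simpa using gTRi : 0 < ((1 + I) * v).re)))
  have ar3 := abs_lt.1 (abs_arg_lt_pi_div_two_iff.2 (Or.inl
    (by simpa using gTRr : 0 < (-v).re)))
  have ar4 : 0 ≤ u.arg := arg_nonneg_iff.2 gTLi.le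
  have ar4' := arg_le_pi u
  have sq0 : (0:ℝ) < Real.sqrt 2 := by positivity
  have sq0' : ((Real.sqrt 2 : ℝ) : ℂ) ≠ 0 := by simp
  have E1 := arg_eq_of ((1 + I) * u) u (mul_ne_zero n3 hu0) hu0 (Real.pi / 4) _ e4
    ⟨Real.sqrt 2, sq0, by field_simp⟩ (by linarith) (by linarith)
  have E2 := arg_eq_of ((1 + I) * v) (-v) (mul_ne_zero n3 hv0) (neg_ne_zero.2 hv0)
    (Real.pi / 4 - Real.pi) (-((1 + I) / Real.sqrt 2))
    (by push_cast; rw [sub_mul, exp_sub, exp_pi_mul_I, ← e4]; push_cast; rw [div_neg, div_one])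
    ⟨Real.sqrt 2, sq0, by field_simp⟩ (by linarith) (by linarith)
  have nA : (p - (a + M * I) : ℂ) ≠ 0 := sub_ne_zero.2 (nea M).symm
  have nB : (p - (b + M * I) : ℂ) ≠ 0 := sub_ne_zero.2 (neb M).symm
  have e2 : exp ((Real.pi / 2 : ℝ) * I) = I := by push_cast; exact exp_pi_div_two_mul_I
  have e2' : exp ((-(Real.pi / 2) : ℝ) * I) = -I := by
    push_cast; rw [← neg_div]; exact exp_neg_pi_div_two_mul_I
  have br1 := abs_lt.1 (abs_arg_lt_pi_div_two_iff.2 (Or.inl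
    (by simpa using hap : 0 < (p - (a + M * I) : ℂ).re)))
  have br2 := abs_lt.1 (abs_arg_lt_pi_div_two_iff.2 (Or.inl
    (by simpa using hpb : 0 < (-(p - (b + M * I)) : ℂ).re)))
  have br3 := abs_lt.1 (abs_arg_lt_pi_div_two_iff.2 (Or.inl
    (by simpa using hM : 0 < (I * (p - (a + M * I)) : ℂ).re)))
  have br4 := abs_lt.1 (abs_arg_lt_pi_div_two_iff.2 (Or.inl
    (by simpa using hM : 0 < (I * (p - (b + M * I)) : ℂ).re)))
  have E3 := arg_eq_of (I * (p - (a + M * I))) (p - (a + M * I)) (mul_ne_zero I_ne_zero nA) nA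
    (Real.pi / 2) _ e2 ⟨1, one_pos, by push_cast; ring⟩ (by linarith) (by linarith)
  have E4 := arg_eq_of (I * (p - (b + M * I))) (-(p - (b + M * I))) (mul_ne_zero I_ne_zero nB)
    (neg_ne_zero.2 nB)
    (-(Real.pi / 2)) _ e2' ⟨1, one_pos, by push_cast; ring⟩ (by linarith) (by linarith)
  rw [E1, E2, E3, E4] at T'
  linarith

open Complex in
lemma norm_Gamma_le' {z : ℂ} (hz : 0 < z.re) : ‖Gamma z‖ ≤ Real.Gamma z.re := by
  rw [Gamma_eq_integral hz, Real.Gamma_eq_integral hz, GammaIntegral]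
  refine (MeasureTheory.norm_integral_le_integral_norm _).trans (le_of_eq ?_)
  refine MeasureTheory.setIntegral_congr_fun measurableSet_Ioi fun x hx => ?_
  rw [norm_mul, Complex.norm_of_nonneg (Real.exp_pos _).le, norm_cpow_eq_rpow_re_of_pos hx]
  simp

lemma sin_pi_s_pos {s : ℝ} (hs : s ∈ Set.Ioo (1/2 : ℝ) 1) : 0 < Real.sin (Real.pi * s) := by
  have := Real.pi_pos
  exact Real.sin_pos_of_pos_of_lt_pi (by nlinarith [hs.1]) (by nlinarith [hs.2])

open Complex in
lemma gFun_left {s : ℝ} (hs : s ∈ Set.Ioo (1/2 : ℝ) 1) (y : ℝ) : ∃ K : ℝ, 0 < K ∧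
    gFun s ((s + 1/2 : ℝ) + y * I) = K * ((s - 1/2 : ℝ) + y * I) * ((s + 1/2 : ℝ) + y * I)
      + (Real.cosh (Real.pi * y) / Real.sin (Real.pi * s) : ℝ) := by
  have h1 := hs.1
  set w : ℂ := (s - 1/2 : ℝ) + y * I with hw
  have wre : w.re = s - 1/2 := by simp [hw]
  have w0 : w ≠ 0 := fun e => by rw [e] at wre; simp at wre; linarith
  have w1 : w + 1 ≠ 0 := fun e => by
    have := congrArg re e; simp [wre] at this; linarith
  have G0 : Gamma w ≠ 0 := Gamma_ne_zero_of_re_pos (by rw [wre]; linarith)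
  refine ⟨normSq (Gamma w) / Real.Gamma (2 * s),
    div_pos (normSq_pos.2 G0) (Real.Gamma_pos_of_pos (by linarith)), ?_⟩
  have a1 : (2 * s - ((s + 1/2 : ℝ) + y * I) : ℂ) = (starRingEnd ℂ) w := by
    apply Complex.ext <;> simp [hw] <;> ring
  have a2 : (((s + 1/2 : ℝ) + y * I) + 1 : ℂ) = w + 1 + 1 := by
    rw [hw]; push_cast; ring
  have a2' : (((s + 1/2 : ℝ) + y * I) : ℂ) = w + 1 := by
    rw [hw]; push_cast; ring
  have a3 : (Real.pi * (s - ((s + 1/2 : ℝ) + y * I)) : ℂ) =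
      -((Real.pi * y : ℝ) * I + Real.pi / 2) := by
    push_cast; ring
  have a4 : Complex.Gamma (2 * s) = Real.Gamma (2 * s) := by
    rw [← Complex.Gamma_ofReal]; push_cast; rfl
  unfold gFun
  rw [a1, a2, a3, a4, a2', Gamma_add_one _ w1, Gamma_add_one _ w0, Gamma_conj, Complex.sin_neg,
    Complex.sin_add_pi_div_two, Complex.cos_mul_I]
  push_cast
  rw [← Complex.mul_conj]
  ring

open Complex in
lemma gFun_right {s : ℝ} (hs : s ∈ Set.Ioo (1/2 : ℝ) 1) (y : ℝ) : ∃ K : ℝ, 0 < K ∧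
    gFun s ((s + 1 : ℝ) + y * I) = K * ((s - 1 : ℝ) + y * I) * (s + y * I) * ((s + 1 : ℝ) + y * I)
      - (Real.sinh (Real.pi * y) / Real.sin (Real.pi * s) : ℝ) * I := by
  have h1 := hs.1
  have h2 := hs.2
  set w : ℂ := (s - 1 : ℝ) + y * I with hw
  have wre : w.re = s - 1 := by simp [hw]
  have w0 : w ≠ 0 := fun e => by rw [e] at wre; simp at wre; linarith
  have w1 : w + 1 ≠ 0 := fun e => by
    have := congrArg re e; simp [wre] at this; linarith
  have w2 : w + 1 + 1 ≠ 0 := fun e => by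
    have := congrArg re e; simp [wre] at this; linarith
  have G0 : Gamma w ≠ 0 := by
    intro e
    have := Gamma_add_one _ w0
    rw [e, mul_zero] at this
    exact Gamma_ne_zero_of_re_pos (by simp [wre]; linarith) this
  refine ⟨normSq (Gamma w) / Real.Gamma (2 * s),
    div_pos (normSq_pos.2 G0) (Real.Gamma_pos_of_pos (by linarith)), ?_⟩
  have a1 : (2 * s - ((s + 1 : ℝ) + y * I) : ℂ) = (starRingEnd ℂ) w := by
    apply Complex.ext <;> simp [hw] <;> ring
  have a2' : (((s + 1 : ℝ) + y * I) : ℂ) = w + 1 + 1 := by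
    rw [hw]; push_cast; ring
  have a2 : ((s + y * I) : ℂ) = w + 1 := by
    rw [hw]; push_cast; ring
  have a3 : (Real.pi * (s - ((s + 1 : ℝ) + y * I)) : ℂ) =
      -((Real.pi * y : ℝ) * I + Real.pi) := by
    push_cast; ring
  have a4 : Complex.Gamma (2 * s) = Real.Gamma (2 * s) := by
    rw [← Complex.Gamma_ofReal]; push_cast; rfl
  unfold gFun
  rw [a1, a3, a4, a2', a2, Gamma_add_one _ w2, Gamma_add_one _ w1, Gamma_add_one _ w0, Gamma_conj,
    Complex.sin_neg, Complex.sin_add_pi, Complex.sin_mul_I]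
  push_cast
  rw [← Complex.mul_conj]
  ring

noncomputable def hFun (s : ℝ) (z : ℂ) : ℂ :=
  Complex.Gamma (2 * s - z + 1) * Complex.Gamma (z + 1) / Complex.Gamma (2 * s) -
    (2 * s - z) * Complex.sin (Real.pi * (s - z)) / Complex.sin (Real.pi * s)

lemma hFun_eq (s : ℝ) (z : ℂ) (hz : z ≠ (2 * s : ℝ)) :
    hFun s z = ((2 * s : ℝ) - z) * gFun s z := by
  unfold hFun gFun
  push_cast at hz ⊢
  rw [Complex.Gamma_add_one _ (sub_ne_zero.2 hz.symm)]
  ring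

open Complex in
lemma hFun_cont (s : ℝ) (z : ℂ) (h1 : -1 < z.re) (h2 : z.re < 2 * s + 1) :
    ContinuousAt (hFun s) z := by
  have key : ∀ w : ℂ, 0 < w.re → ContinuousAt Gamma w := fun w hw =>
    (differentiableAt_Gamma w (fun m e => by
      rw [e] at hw; simp at hw
      have : (0:ℝ) ≤ m := m.cast_nonneg
      linarith)).continuousAt
  have k1 : ContinuousAt (fun z : ℂ => Gamma (2 * s - z + 1)) z :=
    ContinuousAt.comp (f := fun z : ℂ => (2 * s - z + 1 : ℂ)) (key _ (by simp; linarith))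
      (by fun_prop)
  have k2 : ContinuousAt (fun z : ℂ => Gamma (z + 1)) z :=
    ContinuousAt.comp (f := fun z : ℂ => (z + 1 : ℂ)) (key _ (by simp; linarith))
      (by fun_prop)
  unfold hFun
  exact ((k1.mul k2).div_const _).sub (by fun_prop)

lemma hFun_real (s x : ℝ) : (hFun s x).im = 0 := by
  have : hFun s x = (Real.Gamma (2 * s - x + 1) * Real.Gamma (x + 1) / Real.Gamma (2 * s) -
    (2 * s - x) * Real.sin (Real.pi * (s - x)) / Real.sin (Real.pi * s) : ℝ) := by
    unfold hFun
    push_cast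
    rw [← Complex.Gamma_ofReal, ← Complex.Gamma_ofReal, ← Complex.Gamma_ofReal]
    push_cast
    rfl
  rw [this, Complex.ofReal_im]

lemma hFun_p {s : ℝ} (hs : 0 < s) : hFun s (2 * s : ℝ) ≠ 0 := by
  unfold hFun
  push_cast
  rw [sub_self, zero_mul, zero_div, sub_zero, zero_add, Complex.Gamma_one, one_mul]
  refine div_ne_zero (Complex.Gamma_ne_zero_of_re_pos ?_) (Complex.Gamma_ne_zero_of_re_pos ?_)
  · simp; linarith
  · simpa using hs

open Complex in
lemma gFun_analytic {s : ℝ} (z : ℂ) (h1 : -1 < z.re) (h2 : z.re < 2 * s + 1)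
    (hz : z ≠ (2 * s : ℝ)) : AnalyticAt ℂ (gFun s) z := by
  rw [Complex.analyticAt_iff_eventually_differentiableAt]
  have o1 : IsOpen {z : ℂ | -1 < z.re} := isOpen_lt continuous_const continuous_re
  have o2 : IsOpen {z : ℂ | z.re < 2 * s + 1} := isOpen_lt continuous_re continuous_const
  filter_upwards [o1.mem_nhds h1, o2.mem_nhds h2, isOpen_ne.mem_nhds hz] with w k1 k2 k3
  change -1 < w.re at k1
  change w.re < 2 * s + 1 at k2
  change w ≠ _ at k3
  have d1 : DifferentiableAt ℂ (fun z : ℂ => Gamma (z + 1)) w := by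
    refine DifferentiableAt.comp (f := fun z : ℂ => (z + 1 : ℂ)) w
      (differentiableAt_Gamma _ fun m e => ?_) (by fun_prop)
    have := congrArg re e
    have m0 : (0:ℝ) ≤ m := m.cast_nonneg
    simp at this; linarith
  have d2 : DifferentiableAt ℂ (fun z : ℂ => Gamma (2 * s - z)) w := by
    refine DifferentiableAt.comp (f := fun z : ℂ => (2 * s - z : ℂ)) w
      (differentiableAt_Gamma _ fun m e => ?_) (by fun_prop)
    rcases Nat.eq_zero_or_pos m with h | h
    · rw [h] at e
      apply k3
      push_cast at e ⊢
      linear_combination -e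
    · have := congrArg re e
      have m0 : (1:ℝ) ≤ m := by exact_mod_cast h
      simp at this; linarith
  unfold gFun
  exact ((d2.mul d1).div_const _).sub (by fun_prop)

open Complex in
lemma gFun_top {s : ℝ} (hs : s ∈ Set.Ioo (1/2 : ℝ) 1) : ∃ M > 0, ∀ x ∈ Set.Icc (s + 1/2) (s + 1),
    (gFun s (x + (M : ℝ) * I)).im < (gFun s (x + M * I)).re := by
  have h1 := hs.1
  have h2 := hs.2
  have hsin := sin_pi_s_pos hs
  have G2 : 0 < Real.Gamma (2 * s) := Real.Gamma_pos_of_pos (by linarith)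
  have cG : ∀ u : ℝ, 0 < u → ContinuousAt Real.Gamma u := fun u hu =>
    (Real.differentiableAt_Gamma (fun m e => by
      have : (0:ℝ) ≤ m := m.cast_nonneg
      linarith)).continuousAt
  have cont : ContinuousOn (fun x : ℝ => Real.Gamma (2 * s - x + 1) * Real.Gamma (x + 1))
      (Set.Icc (s + 1/2) (s + 1)) := by
    intro x hx
    apply ContinuousAt.continuousWithinAt
    exact (ContinuousAt.comp (f := fun x : ℝ => 2 * s - x + 1) (cG _ (by linarith [hx.2]))
      (by fun_prop)).mul (ContinuousAt.comp (f := fun x : ℝ => x + 1) (cG _ (by linarith [hx.1]))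
      (by fun_prop))
  obtain ⟨C, hC⟩ := isCompact_Icc.exists_bound_of_continuousOn cont
  set K := C / Real.Gamma (2 * s) with hK
  refine ⟨max 1 (2 * K + 1), by positivity, fun x hx => ?_⟩
  set M := max 1 (2 * K + 1)
  have M1 : 1 ≤ M := le_max_left _ _
  have M2 : 2 * K + 1 ≤ M := le_max_right _ _
  set z : ℂ := x + (M : ℝ) * I with hz
  have zim : z.im = M := by simp [hz]
  have zre : z.re = x := by simp [hz]
  have a4 : Complex.Gamma (2 * s) = Real.Gamma (2 * s) := by
    rw [← Complex.Gamma_ofReal]; push_cast; rfl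
  set B : ℂ := Gamma (2 * s - z) * Gamma (z + 1) / Gamma (2 * s) with hB
  have nz : 1 ≤ ‖2 * s - z‖ := by
    refine le_trans ?_ (abs_im_le_norm _)
    simp [zim]
    rw [abs_of_pos (by linarith)]; exact M1
  have nz0 : 2 * s - z ≠ 0 := fun e => by rw [e] at nz; simp at nz; linarith
  have Bn : ‖B‖ ≤ K := by
    rw [hB, a4, norm_div, Complex.norm_of_nonneg G2.le, hK]
    gcongr
    have e1 : ‖Gamma (2 * s - z)‖ ≤ ‖Gamma (2 * s - z + 1)‖ := by
      rw [Gamma_add_one _ nz0, norm_mul]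
      exact le_mul_of_one_le_left (norm_nonneg _) nz
    have e2 : ‖Gamma (2 * s - z + 1)‖ ≤ Real.Gamma (2 * s - x + 1) := by
      have := norm_Gamma_le' (z := 2 * s - z + 1) (by simp [zre]; linarith [hx.2])
      simpa [zre] using this
    have e3 : ‖Gamma (z + 1)‖ ≤ Real.Gamma (x + 1) := by
      have := norm_Gamma_le' (z := z + 1) (by simp [zre]; linarith [hx.1])
      simpa [zre] using this
    rw [norm_mul]
    refine (mul_le_mul (e1.trans e2) e3 (norm_nonneg _)
      (Real.Gamma_nonneg_of_nonneg (by linarith [hx.2]))).trans ?_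
    exact (le_abs_self _).trans (hC x hx)
  set θ := Real.pi * (x - s - 1/2) with hθ
  have hp := Real.pi_pos
  have θ0 : 0 ≤ θ := mul_nonneg hp.le (by linarith [hx.1])
  have θ1 : θ ≤ Real.pi / 2 := by nlinarith [hx.2]
  have c0 : 0 ≤ Real.cos θ := Real.cos_nonneg_of_mem_Icc ⟨by linarith, θ1⟩
  have s0 : 0 ≤ Real.sin θ := Real.sin_nonneg_of_nonneg_of_le_pi θ0 (by linarith)
  have cs : 1 ≤ Real.cos θ + Real.sin θ := by
    nlinarith [Real.sin_sq_add_cos_sq θ, mul_nonneg c0 s0]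
  have g1 : gFun s z = B + ((Real.cos θ * Real.cosh (Real.pi * M) / Real.sin (Real.pi * s) : ℝ)
      - (Real.sin θ * Real.sinh (Real.pi * M) / Real.sin (Real.pi * s) : ℝ) * I) := by
    have a3 : (Real.pi * (s - z) : ℂ) = -((θ : ℂ) + (Real.pi * M : ℝ) * I + Real.pi / 2) := by
      rw [hθ, hz]; push_cast; ring
    unfold gFun
    rw [← hB, a3, Complex.sin_neg, Complex.sin_add_pi_div_two, Complex.cos_add, Complex.cos_mul_I,
      Complex.sin_mul_I]
    push_cast
    ring
  have sh : Real.pi * M ≤ Real.sinh (Real.pi * M) := Real.self_le_sinh_iff.2 (by positivity)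
  have ch : Real.sinh (Real.pi * M) < Real.cosh (Real.pi * M) := Real.sinh_lt_cosh _
  have M3 : M ≤ Real.sinh (Real.pi * M) := by nlinarith [Real.pi_gt_three]
  have main : M ≤ (Real.cos θ * Real.cosh (Real.pi * M) + Real.sin θ * Real.sinh (Real.pi * M))
      / Real.sin (Real.pi * s) := by
    rw [le_div_iff₀ hsin]
    have := Real.sin_le_one (Real.pi * s)
    nlinarith [mul_nonneg c0 (sub_nonneg.2 ch.le)]
  rw [g1]
  rw [add_div] at main
  have b1 := abs_le.1 ((abs_re_le_norm B).trans Bn)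
  have b2 := abs_le.1 ((abs_im_le_norm B).trans Bn)
  simp only [add_re, add_im, sub_re, sub_im, ofReal_re, ofReal_im, mul_re, mul_im, I_re, I_im]
  linarith [b1.1, b2.2]

open Complex in
theorem gFun_zero_aux (s : ℝ) (hs : s ∈ Set.Ioo (1/2 : ℝ) 1) :
    ∃ M > 0, ∃ z : ℂ, z.re ∈ Set.Ioo (s + 1/2) (s + 1) ∧
      z.im ∈ Set.Icc (0 : ℝ) M ∧ AnalyticAt ℂ (gFun s) z ∧ gFun s z = 0 := by
  have h1 := hs.1
  have h2 := hs.2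
  have hsin := sin_pi_s_pos hs
  obtain ⟨M, hM, htop⟩ := gFun_top hs
  refine ⟨M, hM, ?_⟩
  by_contra hno
  push Not at hno
  have hga : (gFun s (s + 1/2 : ℝ)).im = 0 ∧ 0 < (gFun s (s + 1/2 : ℝ)).re := by
    obtain ⟨K, hK, e⟩ := gFun_left hs 0
    have e' : gFun s (s + 1/2 : ℝ) =
        (K * (s - 1/2) * (s + 1/2) + 1 / Real.sin (Real.pi * s) : ℝ) := by
      rw [ofReal_zero, zero_mul, add_zero] at e
      rw [e]; push_cast; simp
    rw [e', ofReal_im, ofReal_re]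
    have : 0 < s - 1/2 := by linarith
    refine ⟨rfl, by positivity⟩
  have hleft : ∀ y ∈ Set.Ioc 0 M, 0 < (gFun s ((s + 1/2 : ℝ) + (y : ℝ) * I)).im := by
    intro y hy
    obtain ⟨K, hK, e⟩ := gFun_left hs y
    rw [e]
    simp only [add_re, add_im, ofReal_re, ofReal_im, mul_re, mul_im, I_re, I_im]
    have : 0 < K * s * y := mul_pos (mul_pos hK (by linarith)) hy.1
    nlinarith
  have hright : ∀ y ∈ Set.Icc 0 M, (gFun s ((s + 1 : ℝ) + (y : ℝ) * I)).re < 0 := by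
    intro y hy
    obtain ⟨K, hK, e⟩ := gFun_right hs y
    rw [e]
    simp only [add_re, add_im, sub_re, ofReal_re, ofReal_im, mul_re, mul_im, I_re, I_im]
    have : 0 < K * (s * ((1 - s) * (s + 1) + 3 * y ^ 2)) := by
      have : 0 < 1 - s := by linarith
      have : 0 < s := by linarith
      positivity
    nlinarith
  have hgb : (gFun s (s + 1 : ℝ)).im = 0 := by
    obtain ⟨K, hK, e⟩ := gFun_right hs 0
    have e' : gFun s (s + 1 : ℝ) = (K * (s - 1) * s * (s + 1) : ℝ) := by
      rw [ofReal_zero, zero_mul, add_zero] at e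
      rw [e]; push_cast; simp
    rw [e', ofReal_im]
  refine winding (s + 1/2) (s + 1) (2 * s) M (by linarith) (by linarith) hM (gFun s) (hFun s)
    ?_ (hFun_eq s) ?_ (fun x _ => hFun_real s x) hga hgb hleft hright htop
  · intro x hx y hy
    exact hFun_cont s _ (by simp; linarith [hx.1]) (by simp; linarith [hx.2])
  · intro x hx y hy e0
    by_cases hz : (x + y * I : ℂ) = (2 * s : ℝ)
    · rw [hz] at e0
      exact hFun_p (by linarith) e0
    rw [hFun_eq s _ hz] at e0
    have e1 : gFun s (x + y * I) = 0 :=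
      (mul_eq_zero.1 e0).resolve_left (sub_ne_zero.2 (Ne.symm hz))
    rcases hx.1.eq_or_lt with k | k
    · rcases hy.1.eq_or_lt with l | l
      · rw [← k, ← l, ofReal_zero, zero_mul, add_zero] at e1
        rw [e1] at hga
        simp at hga
      · have := hleft y ⟨l, hy.2⟩
        rw [k, e1] at this
        simp at this
    rcases hx.2.eq_or_lt with k' | k'
    · have := hright y hy
      rw [← k', e1] at this
      simp at this
    refine hno (x + y * I) ⟨by simpa using k, by simpa using k'⟩ (by simpa using hy)
      (gFun_analytic _ (by simp; linarith) (by simp; linarith) hz) e1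

theorem gFun_exists_zero_high_s (s : ℝ) (hs : s ∈ Set.Ioo (1/2 : ℝ) 1) :
    ∃ M > 0, ∃ z : ℂ, z.re ∈ Set.Ioo (s + 1/2) (s + 1) ∧
      z.im ∈ Set.Icc (0 : ℝ) M ∧ AnalyticAt ℂ (gFun s) z ∧ gFun s z = 0 := by
  exact gFun_zero_aux s hs
end

section
/- Let s ∈ (0, 1/2) and let g(z) = Γ(2s−z) Γ(z+1)/Γ(2s) − sin(π(s−z))/sin(πs). Then there exists M > 0 (possibly depending on s) such that g has at least one zero in the region {z ∈ ℂ : Re z ∈ (2s, 2s+1/2) and Im z ∈ [0,M]}. -/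
open Complex Set

lemma homotopy_zero {U : Set ℂ} (hb : Bornology.IsBounded U) {p q : ℂ → ℂ}
    (hp : DiffContOnCl ℂ p U) (hq : DiffContOnCl ℂ q U) {u0 : ℂ} (hu0 : u0 ∈ closure U)
    (h0 : p u0 = 0)
    (hfr : ∀ l : ℝ, 0 ≤ l → l < 1 → ∀ u ∈ frontier U, p u + l * q u ≠ 0) :
    ∃ u ∈ closure U, p u + q u = 0 := by
  have hK : IsCompact (closure U) := hb.isCompact_closure
  have hKf : IsCompact (frontier U) := hK.of_isClosed_subset isClosed_frontier frontier_subset_closure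
  have hpc := hp.continuousOn
  have hqc := hq.continuousOn
  obtain ⟨Q, hQ⟩ := hK.exists_bound_of_continuousOn hqc
  have hQ0 : 0 ≤ Q := (norm_nonneg _).trans (hQ _ hu0)
  set T : Set ℝ := {l | ∃ u ∈ closure U, p u + l * q u = 0} with hT
  have key : Icc (0:ℝ) 1 ⊆ T := by
    apply IsClosed.Icc_subset_of_forall_exists_gt
    · have hC : IsCompact ((Icc (0:ℝ) 1 ×ˢ closure U) ∩ {x : ℝ × ℂ | p x.2 + x.1 * q x.2 = 0}) := by
        have : IsCompact (Icc (0:ℝ) 1 ×ˢ closure U) := isCompact_Icc.prod hK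
        refine this.of_isClosed_subset ?_ inter_subset_left
        have hcont : ContinuousOn (fun x : ℝ × ℂ => p x.2 + x.1 * q x.2) (Icc (0:ℝ) 1 ×ˢ closure U) := by
          have e : MapsTo (Prod.snd : ℝ × ℂ → ℂ) (Icc (0:ℝ) 1 ×ˢ closure U) (closure U) := fun x hx => hx.2
          refine (hpc.comp continuousOn_snd e).add (ContinuousOn.mul (by fun_prop) (hqc.comp continuousOn_snd e))
        exact hcont.preimage_isClosed_of_isClosed this.isClosed (isClosed_singleton (x := (0:ℂ)))
      have := (hC.image continuous_fst).isClosed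
      convert this using 1
      ext l
      constructor
      · rintro ⟨⟨u, hu, h⟩, hl⟩
        exact ⟨(l, u), ⟨⟨hl, hu⟩, h⟩, rfl⟩
      · rintro ⟨⟨l, u⟩, ⟨⟨hl, hu⟩, h⟩, rfl⟩
        exact ⟨⟨u, hu, h⟩, hl⟩
    · exact ⟨u0, hu0, by simp [h0]⟩
    · rintro l ⟨⟨u, hu, h⟩, hl0, hl1⟩ y hy
      have hy : l < y := hy
      obtain ⟨m, hm, hmin⟩ := hKf.exists_forall_le' (f := fun u => ‖p u + l * q u‖) (a := 0)
        ((((hpc.add (continuousOn_const.mul hqc)).mono frontier_subset_closure)).norm)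
        (fun b hb => norm_pos_iff.2 (hfr l hl0 hl1 b hb))
      obtain ⟨d, hd, hdy, hdm⟩ : ∃ d > 0, d ≤ y - l ∧ d * Q < m / 2 := by
        refine ⟨min (y - l) (m / (4 * (Q + 1))), by have := sub_pos.2 hy; positivity, min_le_left _ _, ?_⟩
        have h1 : min (y - l) (m / (4 * (Q + 1))) * Q ≤ m / (4 * (Q + 1)) * Q :=
          mul_le_mul_of_nonneg_right (min_le_right _ _) hQ0
        have h2 : m / (4 * (Q + 1)) * Q < m / 2 := by
          rw [div_mul_eq_mul_div, div_lt_div_iff₀ (by positivity) (by norm_num)]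
          nlinarith
        linarith
      refine ⟨l + d, ?_, by constructor <;> linarith⟩
      by_contra hno
      have hno' : ∀ v ∈ closure U, p v + ((l + d : ℝ) : ℂ) * q v ≠ 0 := fun v hv e => hno ⟨v, hv, e⟩
      have hdc : DiffContOnCl ℂ (fun v => p v + ((l + d : ℝ) : ℂ) * q v) U := by
        have := hp.add (hq.const_smul ((l + d : ℝ) : ℂ))
        exact this
      have hinv := hdc.inv hno'
      have hdq : ∀ v ∈ closure U, ‖(d : ℂ) * q v‖ < m / 2 := by
        intro v hv
        rw [norm_mul, Complex.norm_real, Real.norm_of_nonneg hd.le]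
        exact (mul_le_mul_of_nonneg_left (hQ v hv) hd.le).trans_lt hdm
      have hle := Complex.norm_le_of_forall_mem_frontier_norm_le hb hinv (C := (m / 2)⁻¹) (by
        intro v hv
        have h1 := hmin v hv
        have h2 := hdq v (frontier_subset_closure hv)
        rw [Pi.inv_apply, norm_inv]
        apply inv_anti₀ (by positivity)
        have e : p v + ((l + d : ℝ) : ℂ) * q v = (p v + l * q v) - (-(d * q v)) := by push_cast; ring
        rw [e]
        have := norm_sub_norm_le (p v + l * q v) (-(d * q v))
        rw [norm_neg] at this
        linarith) hu
      have h2 := hdq u hu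
      have e : p u + ((l + d : ℝ) : ℂ) * q u = d * q u := by
        push_cast; linear_combination h
      rw [Pi.inv_apply, norm_inv, e] at hle
      have hpos : 0 < ‖(d:ℂ) * q u‖ := norm_pos_iff.2 (e ▸ hno' u hu)
      have := (inv_le_inv₀ hpos (by positivity)).1 hle
      linarith
  obtain ⟨u, hu, h⟩ := key (right_mem_Icc.2 zero_le_one)
  exact ⟨u, hu, by simpa using h⟩

lemma c_nonneg (a : ℝ) (ha : 0 < a) (n : ℕ) : 0 ≤ Ring.choose (a + n - 1) n := by
  rw [← Ring.multichoose_eq]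
  have := Ring.factorial_nsmul_multichoose_eq_ascPochhammer a n
  rw [Polynomial.ascPochhammer_smeval_eq_eval, nsmul_eq_mul] at this
  have h2 := ascPochhammer_pos n a ha
  rw [← this] at h2
  exact (pos_of_mul_pos_right h2 (by positivity)).le

lemma binom_sum (a x : ℝ) (hx : x ∈ Ioo (0:ℝ) 1) :
    HasSum (fun n : ℕ => Ring.choose (a + n - 1) n * x ^ n) (1 / (1 - x) ^ a) := by
  have := (Real.one_div_one_sub_rpow_hasFPowerSeriesOnBall_zero a).hasSum (y := x) (by
    simp [Metric.mem_eball, edist_dist, abs_of_pos hx.1, hx.2])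
  simpa [FormalMultilinearSeries.ofScalars_apply_eq, mul_comm] using this

lemma beta_hasSum (a : ℝ) (ha : 0 < a) (ha1 : a < 1) (u : ℂ) (hu : 0 < u.re) :
    HasSum (fun n : ℕ => ((Ring.choose ((1 - a) + n - 1) n : ℝ) : ℂ) * (1 / (u + n)))
      (betaIntegral u a) := by
  have hc := c_nonneg (1 - a) (by linarith)
  have hne1 : ∀ᵐ x : ℝ, x ≠ 1 := by
    simp [MeasureTheory.ae_iff]
  have hmem : ∀ x : ℝ, x ≠ 1 → x ∈ Set.uIoc (0:ℝ) 1 → x ∈ Ioo (0:ℝ) 1 := by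
    intro x h1 hx
    rw [uIoc_of_le zero_le_one] at hx
    exact ⟨hx.1, lt_of_le_of_ne hx.2 h1⟩
  have hpow : ∀ x ∈ Ioo (0:ℝ) 1, (((1 / (1 - x) ^ (1 - a) : ℝ)) : ℂ) = (1 - (x:ℂ)) ^ ((a:ℂ) - 1) := by
    intro x hx
    have h1 : 0 < 1 - x := by linarith [hx.2]
    have : (1 / (1 - x) ^ (1 - a) : ℝ) = (1 - x) ^ (a - 1) := by
      rw [one_div, ← Real.rpow_neg h1.le]; ring_nf
    rw [this, Complex.ofReal_cpow h1.le]
    push_cast; rfl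
  have hconv := betaIntegral_convergent hu (v := (a:ℂ)) (by simpa using ha)
  have key := intervalIntegral.hasSum_integral_of_dominated_convergence (μ := MeasureTheory.volume)
    (a := 0) (b := 1)
    (F := fun (n : ℕ) (x : ℝ) => ((Ring.choose ((1 - a) + n - 1) n : ℝ) : ℂ) * (x:ℂ) ^ (u + n - 1))
    (f := fun x : ℝ => (x : ℂ) ^ (u - 1) * (1 - (x : ℂ)) ^ ((a:ℂ) - 1))
    (fun n x => ‖(x:ℂ) ^ (u - 1)‖ * (Ring.choose ((1 - a) + n - 1) n * x ^ n)) ?_ ?_ ?_ ?_ ?_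
  · convert! key using 1
    ext n
    rw [intervalIntegral.integral_const_mul]
    congr 1
    have hun : 0 < (u + n).re := by simp; positivity
    have := betaIntegral_eval_one_right hun
    rw [← this, betaIntegral]
    simp
  · intro n
    apply Measurable.aestronglyMeasurable
    fun_prop
  · intro n
    filter_upwards [hne1] with x h1 hx
    have hx := hmem x h1 hx
    have hx0 : (x:ℂ) ≠ 0 := by exact_mod_cast hx.1.ne'
    rw [norm_mul, Complex.norm_real, Real.norm_of_nonneg (hc n),
      show u + n - 1 = (u - 1) + n by ring, cpow_add _ _ hx0, norm_mul, cpow_natCast, norm_pow,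
      Complex.norm_real, Real.norm_of_nonneg hx.1.le]
    apply le_of_eq; ring
  · filter_upwards [hne1] with x h1 hx
    exact (binom_sum (1 - a) x (hmem x h1 hx)).summable.mul_left _
  · refine hconv.norm.congr_ae ?_
    rw [Filter.EventuallyEq, MeasureTheory.ae_restrict_iff' measurableSet_uIoc]
    filter_upwards [hne1] with x h1 hx
    have hx := hmem x h1 hx
    rw [tsum_mul_left, (binom_sum (1 - a) x hx).tsum_eq, norm_mul, ← hpow x hx, Complex.norm_real,
      Real.norm_of_nonneg]
    have : 0 < 1 - x := by linarith [hx.2]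
    positivity
  · filter_upwards [hne1] with x h1 hx
    have hx := hmem x h1 hx
    have hx0 : (x:ℂ) ≠ 0 := by exact_mod_cast hx.1.ne'
    have := (Complex.hasSum_ofReal.2 (binom_sum (1 - a) x hx)).mul_left ((x:ℂ) ^ (u - 1))
    rw [hpow x hx] at this
    convert! this using 1
    ext n
    rw [show u + n - 1 = (u - 1) + n by ring, cpow_add _ _ hx0, cpow_natCast]
    push_cast; ring

lemma beta_bound (a : ℝ) (ha : 0 < a) (ha1 : a < 1) (u : ℂ) (hu : 0 < u.re) (hi : 0 ≤ u.im) :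
    u.re / normSq u ≤ (betaIntegral u a).re ∧ (betaIntegral u a).im ≤ 0 := by
  have hc := c_nonneg (1 - a) (by linarith)
  have h := beta_hasSum a ha ha1 u hu
  have hre := Complex.hasSum_re h
  have him := Complex.hasSum_im h
  constructor
  · have := le_hasSum hre 0 (by
      intro n _
      rw [Complex.re_ofReal_mul]
      refine mul_nonneg (hc n) ?_
      rw [one_div, Complex.inv_re]
      have := normSq_nonneg (u + n)
      simp only [add_re, natCast_re]
      positivity)
    simpa [Complex.inv_re] using this
  · refine hasSum_le (fun n => ?_) him hasSum_zero
    rw [Complex.im_ofReal_mul]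
    refine mul_nonpos_of_nonneg_of_nonpos (hc n) ?_
    rw [one_div, Complex.inv_im]
    have := normSq_nonneg (u + n)
    simp only [add_im, natCast_im, add_zero]
    exact div_nonpos_of_nonpos_of_nonneg (by linarith) this

/-- the quotient of Gamma functions `1 / B(1+t, 2s)` -/
noncomputable def Rf (s : ℝ) (t : ℂ) : ℂ := Gamma (2 * s + 1 + t) / (Gamma (2 * s) * Gamma (1 + t))

lemma Rf_bound (s : ℝ) (hs : 0 < s) (hs1 : s < 1 / 2) (t : ℂ) (hr : 0 ≤ t.re) (hi : 0 ≤ t.im) :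
    0 < (Rf s t).re ∧ 0 ≤ (Rf s t).im ∧ ‖Rf s t‖ ≤ normSq (1 + t) := by
  have hu : 0 < (1 + t).re := by simp; linarith
  have hb := beta_bound (2 * s) (by linarith) (by linarith) (1 + t) hu (by simpa using hi)
  have hB : Rf s t = (betaIntegral (1 + t) (2 * s : ℝ))⁻¹ := by
    rw [betaIntegral_eq_Gamma_mul_div _ _ hu (by simpa using hs), inv_div, Rf]
    push_cast
    rw [mul_comm (Gamma (1 + t))]
    congr 2; ring
  set b := betaIntegral (1 + t) (2 * s : ℝ)
  have hn : 0 < normSq (1 + t) := normSq_pos.2 (by intro h; rw [h] at hu; simp at hu)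
  have h1 : 1 / normSq (1 + t) ≤ b.re := by
    refine le_trans ?_ hb.1
    gcongr
    simp; linarith
  have h2 : 0 < 1 / normSq (1 + t) := by positivity
  have h3 : 0 < normSq b := normSq_pos.2 (by intro h; rw [h] at h1; simp at h1; linarith)
  rw [hB]
  refine ⟨?_, ?_, ?_⟩
  · rw [inv_re]; exact div_pos (by linarith) h3
  · rw [inv_im]; exact div_nonneg (by linarith [hb.2]) h3.le
  · rw [norm_inv]
    apply inv_le_of_inv_le₀ hn
    rw [← one_div]
    exact h1.trans (re_le_norm b)

lemma Rf_diff (s : ℝ) (hs : 0 < s) (t : ℂ) (hr : 0 ≤ t.re) : DifferentiableAt ℂ (Rf s) t := by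
  have hne : ∀ z : ℂ, 0 < z.re → DifferentiableAt ℂ Gamma z := by
    intro z hz
    apply differentiableAt_Gamma
    intro m h
    rw [h] at hz
    simp at hz
    have : (0:ℝ) ≤ m := by positivity
    linarith
  unfold Rf
  refine DifferentiableAt.div ?_ ?_ ?_
  · exact (hne (2 * s + 1 + t) (by simp; linarith)).comp t (by fun_prop)
  · exact (differentiableAt_const _).mul ((hne (1 + t) (by simp; linarith)).comp t (by fun_prop))
  · exact mul_ne_zero (Gamma_ne_zero_of_re_pos (by simpa using hs))
      (Gamma_ne_zero_of_re_pos (by simp; linarith))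

lemma cos_re' (z : ℂ) : (cos z).re = Real.cos z.re * Real.cosh z.im := by
  rw [cos_eq, ← ofReal_cos, ← ofReal_cosh, ← ofReal_sin, ← ofReal_sinh]
  simp [-ofReal_cos, -ofReal_sin, -ofReal_cosh, -ofReal_sinh]

lemma cos_im' (z : ℂ) : (cos z).im = -(Real.sin z.re * Real.sinh z.im) := by
  rw [cos_eq, ← ofReal_cos, ← ofReal_cosh, ← ofReal_sin, ← ofReal_sinh]
  simp [-ofReal_cos, -ofReal_sin, -ofReal_cosh, -ofReal_sinh]

lemma sinh_le_norm_cos (z : ℂ) (hz : 0 ≤ z.im) : Real.sinh z.im ≤ ‖cos z‖ := by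
  have h0 : 0 ≤ Real.sinh z.im := Real.sinh_nonneg_iff.2 hz
  apply (sq_le_sq₀ h0 (norm_nonneg _)).1
  rw [← normSq_eq_norm_sq, normSq_apply, cos_re', cos_im']
  have h1 := Real.cosh_sq z.im
  have h2 := Real.sin_sq_add_cos_sq z.re
  have e : Real.cos z.re * Real.cosh z.im * (Real.cos z.re * Real.cosh z.im) +
      -(Real.sin z.re * Real.sinh z.im) * -(Real.sin z.re * Real.sinh z.im)
      = Real.sinh z.im ^ 2 + Real.cos z.re ^ 2 := by
    linear_combination Real.cos z.re ^ 2 * h1 + Real.sinh z.im ^ 2 * h2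
  rw [e]
  nlinarith [sq_nonneg (Real.cos z.re)]

lemma exists_sol (s : ℝ) (hs : 0 < s) (hs1 : s < 1 / 2) :
    ∃ t : ℂ, 0 < t.re ∧ t.re < 1 / 2 ∧ 0 ≤ t.im ∧
      cos (Real.pi * s + 2 * Real.pi * t) =
        Real.cos (Real.pi * s) - 2 * Real.pi * Real.sin (Real.pi * s) * Rf s t := by
  have hpi := Real.pi_pos
  have hpi3 := Real.pi_gt_three
  have hpi4 := Real.pi_lt_four
  have hps : Real.pi * s < Real.pi / 2 := by nlinarith
  have hlt0 : Real.pi * s < Real.pi := by linarith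
  have hps0 : 0 < Real.pi * s := by positivity
  have hcos : 0 < Real.cos (Real.pi * s) := Real.cos_pos_of_mem_Ioo ⟨by linarith, hps⟩
  have hcos1 := Real.cos_le_one (Real.pi * s)
  have hsin : 0 < Real.sin (Real.pi * s) := Real.sin_pos_of_mem_Ioo ⟨hps0, by linarith⟩
  have hsin1 := Real.sin_le_one (Real.pi * s)
  set C := Real.cos (Real.pi * s) with hC
  set D := 2 * Real.pi * Real.sin (Real.pi * s) with hD
  have hD0 : 0 < D := by positivity
  have hD8 : D ≤ 8 := by rw [hD]; nlinarith
  set U : Set ℂ := Ioo (Real.pi * s) Real.pi ×ℂ Ioo (0:ℝ) 1000 with hU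
  have hcl : closure U = Icc (Real.pi * s) Real.pi ×ℂ Icc (0:ℝ) 1000 := by
    rw [hU, closure_reProdIm, closure_Ioo (by linarith), closure_Ioo (by norm_num)]
  have hUb : Bornology.IsBounded U := Metric.isBounded_Ioo _ _ |>.reProdIm (Metric.isBounded_Ioo _ _)
  let τ : ℂ → ℂ := fun u => (u - Real.pi * s) / (2 * Real.pi)
  have hτe : ∀ u, τ u = ((1 / (2 * Real.pi) : ℝ) : ℂ) * (u - (Real.pi * s : ℝ)) := by
    intro u; simp only [τ]; push_cast; ring
  have hτre : ∀ u, (τ u).re = 1 / (2 * Real.pi) * (u.re - Real.pi * s) := by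
    intro u; rw [hτe, re_ofReal_mul, sub_re, ofReal_re]
  have hτim : ∀ u, (τ u).im = 1 / (2 * Real.pi) * u.im := by
    intro u; rw [hτe, im_ofReal_mul, sub_im, ofReal_im, sub_zero]
  let W : ℂ → ℂ := fun u => (C : ℂ) - (D : ℂ) * Rf s (τ u)
  have hW : ∀ u ∈ closure U, (W u).re < C ∧ (W u).im ≤ 0 ∧ ‖W u‖ ≤ 1 + 8 * (4 + 1000 ^ 2) := by
    intro u hu
    rw [hcl, mem_reProdIm] at hu
    obtain ⟨⟨ha, hb⟩, hc, hd⟩ := hu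
    have i1 : 1 / (2 * Real.pi) ≤ 1 / 6 := by gcongr; linarith
    have i0 : 0 < 1 / (2 * Real.pi) := by positivity
    have t1 : 0 ≤ (τ u).re := by rw [hτre]; apply mul_nonneg i0.le; linarith
    have t2 : 0 ≤ (τ u).im := by rw [hτim]; positivity
    have t3 : (τ u).re ≤ 1 := by rw [hτre]; nlinarith
    have t4 : (τ u).im ≤ 1000 := by rw [hτim]; nlinarith
    obtain ⟨r1, r2, r3⟩ := Rf_bound s hs hs1 (τ u) t1 t2
    have r4 : normSq (1 + τ u) ≤ 4 + 1000 ^ 2 := by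
      rw [normSq_apply]; simp; nlinarith
    refine ⟨?_, ?_, ?_⟩
    · simp only [W]; rw [sub_re, ofReal_re, re_ofReal_mul]; nlinarith
    · simp only [W]; rw [sub_im, ofReal_im, im_ofReal_mul]; nlinarith
    · refine (norm_sub_le _ _).trans ?_
      rw [norm_mul, norm_real, norm_real, Real.norm_of_nonneg hcos.le, Real.norm_of_nonneg hD0.le]
      have : D * ‖Rf s (τ u)‖ ≤ 8 * (4 + 1000 ^ 2) := by gcongr; exact r3.trans r4
      linarith
  have hsh1 : 0 < Real.sinh 1 := Real.sinh_pos_iff.2 one_pos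
  have hsh1' : Real.sinh 1 ≤ 2 := by
    rw [Real.sinh_eq]; linarith [Real.exp_one_lt_d9, Real.exp_pos (-1)]
  have hshB : 3 + 8 * (4 + 1000 ^ 2) < Real.sinh 1000 := by
    have h1 := Real.pow_div_factorial_le_exp (x := 1000) (by norm_num) 3
    have h2 : Real.exp (-1000) ≤ 1 := Real.exp_le_one_iff.2 (by norm_num)
    rw [Real.sinh_eq]
    norm_num [Nat.factorial] at h1 ⊢
    linarith
  let A : ℂ := -((Real.sinh 1 : ℝ) : ℂ) * I
  have hAre : A.re = 0 := by simp [A, -ofReal_sinh]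
  have hAim : A.im = - Real.sinh 1 := by simp [A, -ofReal_sinh]
  have hAn : ‖A‖ ≤ 2 := by
    simp only [A]; rw [norm_mul, norm_neg, norm_real, norm_I, Real.norm_of_nonneg hsh1.le]; linarith
  have hWd : ∀ u ∈ closure U, DifferentiableAt ℂ W u := by
    intro u hu
    rw [hcl, mem_reProdIm] at hu
    obtain ⟨⟨ha, hb⟩, hc, hd⟩ := hu
    have t1 : 0 ≤ (τ u).re := by rw [hτre]; apply mul_nonneg (by positivity); linarith
    refine (differentiableAt_const _).sub ((differentiableAt_const _).mul ?_)
    exact (Rf_diff s hs (τ u) t1).comp u (by simp only [τ]; fun_prop)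
  have hp : DiffContOnCl ℂ (fun u => cos u - A) U :=
    (show Differentiable ℂ (fun u => cos u - A) by fun_prop).diffContOnCl
  have hq : DiffContOnCl ℂ (fun u => A - W u) U := by
    apply DifferentiableOn.diffContOnCl
    intro u hu
    exact ((differentiableAt_const _).sub (hWd u hu)).differentiableWithinAt
  obtain ⟨u, hu, he⟩ := homotopy_zero hUb hp hq (u0 := (Real.pi / 2 : ℝ) + (1:ℝ) * I)
    (by
      rw [hcl, mem_reProdIm]
      simp
      exact ⟨hps.le, hpi.le⟩)
    (by
      apply Complex.ext
      · rw [sub_re, cos_re', hAre]; simp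
      · rw [sub_im, cos_im', hAim]; simp)
    (by
      intro l hl0 hl1 u huf h0
      have huc := frontier_subset_closure huf
      obtain ⟨w1, w2, w3⟩ := hW u huc
      have hcu : cos u = ((1 - l : ℝ) : ℂ) * A + (l : ℂ) * W u := by
        push_cast; linear_combination h0
      have hre : Real.cos u.re * Real.cosh u.im = l * (W u).re := by
        rw [← cos_re', hcu, add_re, re_ofReal_mul, re_ofReal_mul, hAre]; ring
      have him : Real.sin u.re * Real.sinh u.im = (1 - l) * Real.sinh 1 - l * (W u).im := by
        have := cos_im' u
        rw [hcu, add_im, im_ofReal_mul, im_ofReal_mul, hAim] at this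
        linarith
      have himpos : 0 < Real.sin u.re * Real.sinh u.im := by
        rw [him]
        have := mul_pos (sub_pos.2 hl1) hsh1
        nlinarith
      rw [hU, frontier_reProdIm, frontier_Ioo (a := Real.pi * s) (b := Real.pi) hlt0,
        frontier_Ioo (a := (0:ℝ)) (b := 1000) (by norm_num)] at huf
      rcases huf with huf | huf
      · rw [mem_reProdIm] at huf
        rcases huf.2 with hh | hh
        · rw [hh] at himpos; simp at himpos
        · have hh : u.im = 1000 := hh
          have h1 := sinh_le_norm_cos u (by rw [hh]; norm_num)
          rw [hh, hcu] at h1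
          have h2 := norm_add_le (((1 - l : ℝ) : ℂ) * A) ((l : ℂ) * W u)
          rw [norm_mul _ A, norm_mul _ (W u), norm_real, norm_real, Real.norm_of_nonneg hl0,
            Real.norm_of_nonneg (by linarith)] at h2
          have h3 : (1 - l) * ‖A‖ ≤ 1 * 2 := by gcongr; linarith
          have h4 : l * ‖W u‖ ≤ 1 * (1 + 8 * (4 + 1000 ^ 2)) := by gcongr
          linarith
      · rw [mem_reProdIm] at huf
        rcases huf.1 with hh | hh
        · rw [hh] at hre
          have h1 := Real.one_le_cosh u.im
          have h2 : C ≤ C * Real.cosh u.im := by nlinarith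
          rw [← hC] at hre
          nlinarith
        · have hh : u.re = Real.pi := hh
          rw [hh] at himpos; simp at himpos)
  have he' : cos u = W u := by linear_combination he
  obtain ⟨w1, w2, w3⟩ := hW u hu
  rw [hcl, mem_reProdIm] at hu
  obtain ⟨⟨ha, hb⟩, hc, hd⟩ := hu
  have hlt : Real.pi * s < u.re := by
    refine lt_of_le_of_ne ha fun hh => ?_
    have hre : Real.cos u.re * Real.cosh u.im = (W u).re := by rw [← cos_re', he']
    rw [← hh, ← hC] at hre
    have h1 := Real.one_le_cosh u.im
    nlinarith
  refine ⟨τ u, ?_, ?_, ?_, ?_⟩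
  · rw [hτre]; apply mul_pos (by positivity); linarith
  · rw [hτre, div_mul_eq_mul_div, div_lt_div_iff₀ (by positivity) (by norm_num)]; linarith
  · rw [hτim]; positivity
  · have : (Real.pi : ℂ) * s + 2 * Real.pi * τ u = u := by
      simp only [τ]
      have : (Real.pi : ℂ) ≠ 0 := by exact_mod_cast hpi.ne'
      field_simp; ring
    rw [this, he']
    simp only [W, hD]; push_cast; ring

theorem gFun_exists_zero_low_s (s : ℝ) (hs : s ∈ Set.Ioo (0 : ℝ) (1/2)) :
    ∃ M > 0, ∃ z : ℂ, z.re ∈ Set.Ioo (2 * s) (2 * s + 1/2) ∧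
      z.im ∈ Set.Icc (0 : ℝ) M ∧ AnalyticAt ℂ (gFun s) z ∧ gFun s z = 0 := by
  obtain ⟨hs0, hs1⟩ := hs
  obtain ⟨t, ht0, ht1, hti, he⟩ := exists_sol s hs0 hs1
  have hpi := Real.pi_pos
  have hpic : (Real.pi : ℂ) ≠ 0 := by exact_mod_cast hpi.ne'
  have hsin : Real.sin (Real.pi * s) ≠ 0 :=
    (Real.sin_pos_of_mem_Ioo ⟨by positivity, by nlinarith⟩).ne'
  have hsinc : Complex.sin (Real.pi * s) ≠ 0 := by exact_mod_cast hsin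
  have hsint : Complex.sin (Real.pi * t) ≠ 0 := by
    intro h
    obtain ⟨k, hk⟩ := Complex.sin_eq_zero_iff.1 h
    have hk' : t = k := by
      rw [mul_comm] at hk; exact mul_right_cancel₀ hpic hk
    rw [hk'] at ht0 ht1
    simp at ht0 ht1
    have : k < 1 := by
      have : (k:ℝ) < 1 := by linarith
      exact_mod_cast this
    omega
  have hG2 : Gamma (2 * s) ≠ 0 := Gamma_ne_zero_of_re_pos (by simpa using hs0)
  have hG1 : Gamma (1 + t) ≠ 0 := Gamma_ne_zero_of_re_pos (by simp; linarith)
  refine ⟨t.im + 1, by linarith, 2 * s + t, ?_, ?_, ?_, ?_⟩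
  · simp; constructor <;> linarith
  · simp; linarith
  · have hd : DifferentiableOn ℂ (gFun s) {z : ℂ | 2 * s < z.re ∧ z.re < 2 * s + 1} := by
      rintro z ⟨h1, h2⟩
      apply DifferentiableAt.differentiableWithinAt
      unfold gFun
      have d1 : DifferentiableAt ℂ Gamma (2 * s - z) := by
        apply differentiableAt_Gamma
        intro m h
        have h := congrArg Complex.re h
        simp at h
        have a1 : (0:ℝ) < m := by linarith
        have a2 : (m:ℝ) < 1 := by linarith
        norm_cast at a1 a2
        omega
      have d2 : DifferentiableAt ℂ Gamma (z + 1) := by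
        apply differentiableAt_Gamma
        intro m h
        have h := congrArg Complex.re h
        simp at h
        have : (0:ℝ) ≤ m := by positivity
        linarith
      have d1' : DifferentiableAt ℂ (fun z => Gamma (2 * s - z)) z :=
        d1.comp z (by fun_prop)
      have d2' : DifferentiableAt ℂ (fun z => Gamma (z + 1)) z :=
        d2.comp z (by fun_prop)
      exact ((d1'.mul d2').div_const _).sub (by fun_prop)
    refine hd.analyticAt (IsOpen.mem_nhds ?_ ?_)
    · exact (isOpen_lt continuous_const Complex.continuous_re).inter
        (isOpen_lt Complex.continuous_re continuous_const)
    · simp; constructor <;> linarith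
  · have hrefl := Complex.Gamma_mul_Gamma_one_sub (-t)
    rw [sub_neg_eq_add, mul_neg, Complex.sin_neg] at hrefl
    have hcc : Complex.cos (Real.pi * s) - Complex.cos (Real.pi * s + 2 * Real.pi * t) =
        2 * Complex.sin (Real.pi * (s + t)) * Complex.sin (Real.pi * t) := by
      rw [Complex.cos_sub_cos, show ((Real.pi:ℂ) * s + (Real.pi * s + 2 * Real.pi * t)) / 2 = Real.pi * (s + t) by ring,
        show ((Real.pi:ℂ) * s - (Real.pi * s + 2 * Real.pi * t)) / 2 = -(Real.pi * t) by ring, Complex.sin_neg]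
      ring
    rw [he] at hcc
    push_cast at hcc
    have hkey : Complex.sin (Real.pi * (s + t)) * Complex.sin (Real.pi * t) =
        Real.pi * Complex.sin (Real.pi * s) * Rf s t := by linear_combination (-1/2) * hcc
    have hGt : Gamma (-t) = -(Real.pi / (Complex.sin (Real.pi * t) * Gamma (1 + t))) := by
      rw [eq_div_iff (neg_ne_zero.2 hsint)] at hrefl
      rw [← neg_div, eq_div_iff (mul_ne_zero hsint hG1)]
      linear_combination -hrefl
    unfold gFun
    rw [show (2 * s - (2 * s + t) : ℂ) = -t by ring, hGt,
      show (Real.pi * (s - (2 * s + t)) : ℂ) = -(Real.pi * (s + t)) by ring, Complex.sin_neg,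
      show (2 * s + t + 1 : ℂ) = 2 * s + 1 + t by ring]
    have hR : Gamma (2 * s + 1 + t) = Rf s t * (Gamma (2 * s) * Gamma (1 + t)) := by
      rw [Rf, div_mul_cancel₀ _ (mul_ne_zero hG2 hG1)]
    rw [hR]
    field_simp
    linear_combination hkey
end
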